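/- arXiv:1604.08830 — 2 statements merged into one kernel-verified Lean document; each statement's English description precedes it below -/
import Mathlib

section
/- Let n ≥ 2, −∞ < μ < 1/4 and let γ ∈ ℝ satisfy Λ(γ) < Λ(α₊), where Λ(s) := s(s+n−2). Then there exists a positive function k : (0,1] → (0,∞), twice continuously differentiable on (0,1) and continuous at t = 1 with k(1) > 0, solving (1−t²)k''(t) − (n−1)t k'(t) + (μ/t²)k(t) + Λ(γ)k(t) = 0 for t ∈ (0,1), and such that lim_{t→0⁺} k(t)/t^{α₋} exists and is a positive constant. Moreover, the functions H₊(x) := |x|^γ k(x₁/|x|) and H₋(x) := |x|^{−(γ+n−2)} k(x₁/|x|) are positive L_μ-harmonic functions on ℝⁿ₊. -/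
open Real Set

noncomputable def lap {n : ℕ} (u : EuclideanSpace ℝ (Fin n) → ℝ)
    (x : EuclideanSpace ℝ (Fin n)) : ℝ :=
  ∑ i : Fin n, iteratedFDeriv ℝ 2 u x ![EuclideanSpace.single i 1, EuclideanSpace.single i 1]

noncomputable def x1 {n : ℕ} (x : EuclideanSpace ℝ (Fin n)) : ℝ :=
  if h : 0 < n then x ⟨0, h⟩ else 0

def halfSpace (n : ℕ) : Set (EuclideanSpace ℝ (Fin n)) := {x | 0 < x1 x}

noncomputable def aPlus (μ : ℝ) : ℝ := 1 / 2 + Real.sqrt (1 / 4 - μ)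

noncomputable def aMinus (μ : ℝ) : ℝ := 1 / 2 - Real.sqrt (1 / 4 - μ)

noncomputable def Lam (n : ℕ) (s : ℝ) : ℝ := s * (s + n - 2)

/-!
Separating variables, `|x| ^ s * k (x₁ / |x|)` is `L_μ`-harmonic as soon as `k` solves the angular
equation with eigenvalue `Λ(s)`, and `γ`, `-(γ + n - 2)` are the two exponents with the same
eigenvalue. The substitution `k t = t ^ α₊ * F (1 - t ^ 2)` turns the angular equation into
Gauss's hypergeometric equation with `a = (α₊ - γ) / 2`, `b = (α₊ + γ + n - 2) / 2` and
`c = (n - 1) / 2`. Since `4ab = Λ(α₊) - Λ(γ)` and `a + b > 0`, the hypothesis on `γ` says precisely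
that `a, b > 0`, so all Taylor coefficients of `F = ₂F₁(a, b; c; ·)` are positive. They are
asymptotic to a multiple of those of `(1 - z) ^ (-ν)`, where `ν = a + b - c = √(1/4 - μ)`, so by an
Abelian theorem `F (1 - t ^ 2)` grows like `t ^ (-2ν)` as `t → 0`, and `α₊ - 2ν = α₋`.
-/

section PowerSeries

open FormalMultilinearSeries

variable {𝕜 : Type*} [NontriviallyNormedField 𝕜] {f : 𝕜 → 𝕜} {u : ℕ → 𝕜}

theorem mem_eball_zero_one_iff {E : Type*} [SeminormedAddCommGroup E] {z : E} :
    z ∈ Metric.eball 0 1 ↔ ‖z‖ < 1 := by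
  rw [Metric.mem_eball, edist_zero_right, ← ofReal_norm, ENNReal.ofReal_lt_one]

theorem hasSum_of_hasFPowerSeriesOnBall_ofScalars {r : ENNReal}
    (h : HasFPowerSeriesOnBall f (ofScalars 𝕜 u) 0 r) {z : 𝕜} (hz : z ∈ Metric.eball 0 r) :
    HasSum (fun m => u m * z ^ m) (f z) := by
  simpa only [ofScalars_apply_eq, zero_add, smul_eq_mul] using h.hasSum hz

theorem hasSum_mul_pow_of_shift {w : ℕ → 𝕜} {z S : 𝕜} (h₀ : w 0 = 0)
    (h : HasSum (fun m => w (m + 1) * z ^ m) S) : HasSum (fun m => w m * z ^ m) (z * S) := by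
  rw [← hasSum_nat_add_iff' 1, Finset.sum_range_one, h₀, zero_mul, sub_zero]
  exact (h.mul_left z).congr_fun fun m => by ring

theorem hasFPowerSeriesOnBall_deriv_ofScalars [CompleteSpace 𝕜] {r : ENNReal}
    (h : HasFPowerSeriesOnBall f (ofScalars 𝕜 u) 0 r) :
    HasFPowerSeriesOnBall (deriv f) (ofScalars 𝕜 fun m => (m + 1) * u (m + 1)) 0 r := by
  have h' := (ContinuousLinearMap.apply 𝕜 𝕜 (1 : 𝕜)).comp_hasFPowerSeriesOnBall h.fderiv
  have hp : (ContinuousLinearMap.apply 𝕜 𝕜 (1 : 𝕜)).compFormalMultilinearSeries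
      (ofScalars 𝕜 u).derivSeries = ofScalars 𝕜 fun m => (m + 1) * u (m + 1) := by
    refine FormalMultilinearSeries.ext fun m => ?_
    refine ContinuousMultilinearMap.ext_ring ?_
    refine ((ofScalars 𝕜 u).derivSeries_coeff_one m).trans ?_
    rw [ofScalars_apply_eq, coeff_ofScalars]
    simp
  rw [hp] at h'
  exact h'.congr fun z _ => rfl

end PowerSeries

section Abelian

open Filter Topology Asymptotics

theorem norm_le_sum_norm_add_of_hasSum {ι E : Type*} [SeminormedAddCommGroup E] {a : ι → E}
    {b : ι → ℝ} {A : E} {B : ℝ} (ha : HasSum a A) (hb : HasSum b B) (hb₀ : ∀ i, 0 ≤ b i)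
    (s : Finset ι) (hab : ∀ i ∉ s, ‖a i‖ ≤ b i) : ‖A‖ ≤ ∑ i ∈ s, ‖a i‖ + B := by
  classical
  have hs : HasSum (fun i => if i ∈ s then ‖a i‖ else 0) (∑ i ∈ s, ‖a i‖) := by
    rw [← Finset.sum_congr rfl fun i hi => if_pos hi]
    exact hasSum_sum_of_ne_finset_zero fun i hi => if_neg hi
  refine ha.norm_le_of_bounded (hs.add hb) fun i => ?_
  by_cases hi : i ∈ s
  · simpa only [if_pos hi] using le_add_of_nonneg_right (hb₀ i)
  · simpa only [if_neg hi, zero_add] using hab i hi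

theorem isLittleO_of_hasSum_pow_smul {E : Type*} [SeminormedAddCommGroup E] [NormedSpace ℝ E]
    {u : ℕ → E} {v : ℕ → ℝ} {f : ℝ → E} {g : ℝ → ℝ} (hv : ∀ m, 0 ≤ v m) (huv : u =o[atTop] v)
    (hf : ∀ᶠ z in 𝓝[<] 1, HasSum (fun m => z ^ m • u m) (f z))
    (hg : ∀ᶠ z in 𝓝[<] 1, HasSum (fun m => z ^ m * v m) (g z))
    (hlim : Tendsto g (𝓝[<] 1) atTop) : f =o[𝓝[<] 1] g := by
  -- The finitely many terms where `‖u m‖` is not yet small against `v m` stay bounded as `z → 1`.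
  refine IsLittleO.of_bound fun ε hε => ?_
  obtain ⟨N, hN⟩ := eventually_atTop.mp (huv.bound (half_pos hε))
  set C : ℝ := ∑ m ∈ Finset.range N, ‖u m‖
  filter_upwards [hf, hg, hlim.eventually_ge_atTop 0,
    (hlim.const_mul_atTop (half_pos hε)).eventually_ge_atTop C,
    Ioo_mem_nhdsLT zero_lt_one] with z hfz hgz hg₀ hgC ⟨hz₀, hz₁⟩
  have hnorm (m : ℕ) : ‖z ^ m • u m‖ = z ^ m * ‖u m‖ := by
    rw [norm_smul, Real.norm_of_nonneg (by positivity)]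
  have htail : ∀ m ∉ Finset.range N, ‖z ^ m • u m‖ ≤ ε / 2 * (z ^ m * v m) := fun m hm => by
    have hum := hN m (not_lt.mp (Finset.mem_range.not.mp hm))
    rw [Real.norm_of_nonneg (hv m)] at hum
    rw [hnorm, mul_left_comm]
    gcongr
  have hhead : ∑ m ∈ Finset.range N, ‖z ^ m • u m‖ ≤ C := by
    refine Finset.sum_le_sum fun m _ => ?_
    rw [hnorm]
    exact mul_le_of_le_one_left (norm_nonneg _) (pow_le_one₀ hz₀.le hz₁.le)
  calc ‖f z‖ ≤ ∑ m ∈ Finset.range N, ‖z ^ m • u m‖ + ε / 2 * g z :=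
        norm_le_sum_norm_add_of_hasSum hfz (hgz.mul_left _)
          (fun m => mul_nonneg (half_pos hε).le (mul_nonneg (by positivity) (hv m))) _ htail
    _ ≤ ε / 2 * g z + ε / 2 * g z := by gcongr; exact hhead.trans hgC
    _ = ε * ‖g z‖ := by rw [Real.norm_of_nonneg hg₀]; ring

theorem isEquivalent_of_hasSum_mul_pow {u v : ℕ → ℝ} {f g : ℝ → ℝ} (hv : ∀ m, 0 ≤ v m)
    (huv : u ~[atTop] v) (hf : ∀ᶠ z in 𝓝[<] 1, HasSum (fun m => u m * z ^ m) (f z))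
    (hg : ∀ᶠ z in 𝓝[<] 1, HasSum (fun m => v m * z ^ m) (g z))
    (hlim : Tendsto g (𝓝[<] 1) atTop) : f ~[𝓝[<] 1] g := by
  simp only [mul_comm _ (_ ^ _)] at hf hg
  refine isLittleO_of_hasSum_pow_smul hv huv ?_ hg hlim
  filter_upwards [hf, hg] with z hfz hgz
  simpa only [Pi.sub_apply, smul_eq_mul, mul_sub] using hfz.sub hgz

end Abelian

section Hypergeometric

open Filter Topology FormalMultilinearSeries Asymptotics
open scoped Nat

variable {𝕂 : Type*} [RCLike 𝕂]

theorem one_le_ordinaryHypergeometricSeries_radius (a b c : 𝕂) :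
    1 ≤ (ordinaryHypergeometricSeries 𝕂 a b c).radius := by
  by_cases h : ∀ k : ℕ, (k : 𝕂) ≠ -a ∧ (k : 𝕂) ≠ -b ∧ (k : 𝕂) ≠ -c
  · exact (ordinaryHypergeometricSeries_radius_eq_one 𝕂 a b c h).ge
  · push Not at h
    obtain ⟨k, hk⟩ := h
    by_cases ha : (k : 𝕂) = -a
    · rw [← neg_eq_iff_eq_neg.mpr ha, ordinaryHypergeometric_radius_top_of_neg_nat₁]
      exact le_top
    by_cases hb : (k : 𝕂) = -b
    · rw [← neg_eq_iff_eq_neg.mpr hb, ordinaryHypergeometric_radius_top_of_neg_nat₂]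
      exact le_top
    · rw [← neg_eq_iff_eq_neg.mpr (hk ha hb), ordinaryHypergeometric_radius_top_of_neg_nat₃]
      exact le_top

theorem hasFPowerSeriesOnBall_ordinaryHypergeometric (a b c : 𝕂) :
    HasFPowerSeriesOnBall (₂F₁ a b c)
      (ofScalars 𝕂 (ordinaryHypergeometricCoefficient a b c)) 0 1 :=
  have h := one_le_ordinaryHypergeometricSeries_radius a b c
  ((ordinaryHypergeometricSeries 𝕂 a b c).hasFPowerSeriesOnBall
    (one_pos.trans_le h)).mono one_pos h

theorem analyticAt_ordinaryHypergeometric (a b c : 𝕂) {z : 𝕂} (hz : ‖z‖ < 1) :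
    AnalyticAt 𝕂 (₂F₁ a b c) z :=
  (hasFPowerSeriesOnBall_ordinaryHypergeometric a b c).analyticAt_of_mem
    (mem_eball_zero_one_iff.mpr hz)

theorem ordinaryHypergeometricCoefficient_succ (a b : 𝕂) {c : 𝕂} {m : ℕ} (hc : c + m ≠ 0) :
    (m + 1) * (c + m) * ordinaryHypergeometricCoefficient a b c (m + 1) =
      (a + m) * (b + m) * ordinaryHypergeometricCoefficient a b c m := by
  have hm : (m + 1 : 𝕂) ≠ 0 := by exact_mod_cast m.succ_ne_zero
  simp only [ordinaryHypergeometricCoefficient, ascPochhammer_succ_eval, Nat.factorial_succ,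
    Nat.cast_mul, Nat.cast_succ, mul_inv]
  field_simp

theorem ordinaryHypergeometric_ode (a b : 𝕂) {c z : 𝕂} (hc : ∀ m : ℕ, c + m ≠ 0)
    (hz : ‖z‖ < 1) :
    z * (1 - z) * deriv (deriv (₂F₁ a b c)) z + (c - (a + b + 1) * z) * deriv (₂F₁ a b c) z
      - a * b * ₂F₁ a b c z = 0 := by
  set F : 𝕂 → 𝕂 := ₂F₁ a b c
  set u := ordinaryHypergeometricCoefficient a b c
  have hF := hasFPowerSeriesOnBall_ordinaryHypergeometric a b c
  have hF' := hasFPowerSeriesOnBall_deriv_ofScalars hF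
  have hF'' := hasFPowerSeriesOnBall_deriv_ofScalars hF'
  have hz' := mem_eball_zero_one_iff.mpr hz
  have s₀ : HasSum (fun m => u m * z ^ m) (F z) :=
    hasSum_of_hasFPowerSeriesOnBall_ofScalars hF hz'
  have s₁ : HasSum (fun m => (m + 1) * u (m + 1) * z ^ m) (deriv F z) :=
    hasSum_of_hasFPowerSeriesOnBall_ofScalars hF' hz'
  have s₂ := hasSum_of_hasFPowerSeriesOnBall_ofScalars hF'' hz'
  have zs₁ : HasSum (fun m => m * u m * z ^ m) (z * deriv F z) :=
    hasSum_mul_pow_of_shift (by simp) (by simpa using s₁)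
  have zs₂ : HasSum (fun m => m * ((m + 1) * u (m + 1)) * z ^ m) (z * deriv (deriv F) z) :=
    hasSum_mul_pow_of_shift (w := fun m => m * ((m + 1) * u (m + 1))) (by simp) (by simpa using s₂)
  have zzs₂ : HasSum (fun m => m * (m - 1) * u m * z ^ m) (z * (z * deriv (deriv F) z)) := by
    refine hasSum_mul_pow_of_shift (w := fun m => m * (m - 1) * u m) (by simp) ?_
    exact zs₂.congr_fun fun m => by push_cast; ring
  have hsum := (((zs₂.sub zzs₂).add (s₁.mul_left c)).sub (zs₁.mul_left (a + b + 1))).sub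
    (s₀.mul_left (a * b))
  have hzero : HasSum (fun _ : ℕ => (0 : 𝕂))
      (z * deriv (deriv F) z - z * (z * deriv (deriv F) z) + c * deriv F z
        - (a + b + 1) * (z * deriv F z) - a * b * F z) :=
    hsum.congr_fun fun m => by
      linear_combination -z ^ m * ordinaryHypergeometricCoefficient_succ a b (hc m)
  linear_combination hzero.unique hasSum_zero

theorem ascPochhammer_eval_eq_prod_range {R : Type*} [CommSemiring R] (m : ℕ) (s : R) :
    (ascPochhammer R m).eval s = ∏ j ∈ Finset.range m, (s + j) := by
  induction m with
  | zero => simp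
  | succ m ih => rw [ascPochhammer_succ_eval, Finset.prod_range_succ, ih]

theorem Gamma_mul_div_Gamma_mul_pos {a b c d : ℝ} (ha : 0 < a) (hb : 0 < b) (hc : 0 < c)
    (hd : 0 < d) : 0 < Real.Gamma c * Real.Gamma d / (Real.Gamma a * Real.Gamma b) :=
  div_pos (mul_pos (Real.Gamma_pos_of_pos hc) (Real.Gamma_pos_of_pos hd))
    (mul_pos (Real.Gamma_pos_of_pos ha) (Real.Gamma_pos_of_pos hb))

theorem tendsto_ascPochhammer_ratio {a b c d : ℝ} (ha : 0 < a) (hb : 0 < b) (hc : 0 < c)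
    (hd : 0 < d) (habcd : a + b = c + d) :
    Tendsto (fun m : ℕ => (ascPochhammer ℝ m).eval a * (ascPochhammer ℝ m).eval b /
        ((ascPochhammer ℝ m).eval c * (ascPochhammer ℝ m).eval d)) atTop
      (𝓝 (Real.Gamma c * Real.Gamma d / (Real.Gamma a * Real.Gamma b))) := by
  have hGamma : Real.Gamma a * Real.Gamma b ≠ 0 :=
    (mul_pos (Real.Gamma_pos_of_pos ha) (Real.Gamma_pos_of_pos hb)).ne'
  rw [← tendsto_add_atTop_iff_nat 1]
  refine (((Real.GammaSeq_tendsto_Gamma c).mul (Real.GammaSeq_tendsto_Gamma d)).div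
    ((Real.GammaSeq_tendsto_Gamma a).mul (Real.GammaSeq_tendsto_Gamma b)) hGamma).congr' ?_
  filter_upwards [eventually_gt_atTop 0] with m hm
  have hm₀ : (0 : ℝ) < m := by exact_mod_cast hm
  -- In Euler's products the factors `m ^ s * m !` cancel because `a + b = c + d`.
  have hpow : (m : ℝ) ^ a * (m : ℝ) ^ b = (m : ℝ) ^ c * (m : ℝ) ^ d := by
    rw [← Real.rpow_add hm₀, ← Real.rpow_add hm₀, habcd]
  have hp {s : ℝ} (hs : 0 < s) := (ascPochhammer_pos (m + 1) s hs).ne'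
  have hpa := hp ha
  have hpb := hp hb
  have hpc := hp hc
  have hpd := hp hd
  have hma := (Real.rpow_pos_of_pos hm₀ a).ne'
  have hmb := (Real.rpow_pos_of_pos hm₀ b).ne'
  simp only [Pi.div_apply, Real.GammaSeq, ← ascPochhammer_eval_eq_prod_range]
  field_simp
  exact hpow.symm

theorem ringChoose_eq_ascPochhammer_div_factorial (s : ℝ) (m : ℕ) :
    Ring.choose (s + m - 1) m = (ascPochhammer ℝ m).eval s / m ! := by
  rw [← Ring.multichoose_eq, eq_div_iff (by positivity), mul_comm, ← nsmul_eq_mul,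
    Ring.factorial_nsmul_multichoose_eq_ascPochhammer, Polynomial.ascPochhammer_smeval_eq_eval]

theorem hasSum_ascPochhammer_mul_pow (s : ℝ) {z : ℝ} (hz : |z| < 1) :
    HasSum (fun m : ℕ => (ascPochhammer ℝ m).eval s / m ! * z ^ m) ((1 - z) ^ (-s)) := by
  rw [Real.rpow_neg (by linarith [lt_of_abs_lt hz]), ← one_div]
  simpa only [ringChoose_eq_ascPochhammer_div_factorial] using
    hasSum_of_hasFPowerSeriesOnBall_ofScalars
      (Real.one_div_one_sub_rpow_hasFPowerSeriesOnBall_zero s) (mem_eball_zero_one_iff.mpr hz)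

theorem tendsto_one_sub_nhdsLT_one : Tendsto (fun z : ℝ => 1 - z) (𝓝[<] 1) (𝓝[>] 0) := by
  have h : Tendsto (fun z : ℝ => 1 - z) (𝓝 1) (𝓝 0) :=
    Continuous.tendsto' (by fun_prop) _ _ (sub_self 1)
  refine tendsto_nhdsWithin_of_tendsto_nhds_of_eventually_within _
    (h.mono_left nhdsWithin_le_nhds) ?_
  filter_upwards [self_mem_nhdsWithin] with z (hz : z < 1)
  exact sub_pos.mpr hz

theorem ordinaryHypergeometric_pos {a b c z : ℝ} (ha : 0 < a) (hb : 0 < b) (hc : 0 < c)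
    (hz₀ : 0 ≤ z) (hz₁ : z < 1) : 0 < ₂F₁ a b c z := by
  have hcoef (m : ℕ) : 0 < ordinaryHypergeometricCoefficient a b c m := by
    have := ascPochhammer_pos m a ha
    have := ascPochhammer_pos m b hb
    have := ascPochhammer_pos m c hc
    positivity
  have h := hasSum_of_hasFPowerSeriesOnBall_ofScalars
    (hasFPowerSeriesOnBall_ordinaryHypergeometric a b c) (z := z)
    (mem_eball_zero_one_iff.mpr (by rwa [Real.norm_of_nonneg hz₀]))
  rw [← h.tsum_eq]
  exact h.summable.tsum_pos (fun m => mul_nonneg (hcoef m).le (pow_nonneg hz₀ m)) 0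
    (by simp)

theorem isEquivalent_ordinaryHypergeometricCoefficient {a b c d : ℝ} (ha : 0 < a) (hb : 0 < b)
    (hc : 0 < c) (hd : 0 < d) (habcd : a + b = c + d) :
    ordinaryHypergeometricCoefficient a b c ~[atTop] fun m =>
      Real.Gamma c * Real.Gamma d / (Real.Gamma a * Real.Gamma b) *
        ((ascPochhammer ℝ m).eval d / m !) := by
  have hL := Gamma_mul_div_Gamma_mul_pos ha hb hc hd
  set L := Real.Gamma c * Real.Gamma d / (Real.Gamma a * Real.Gamma b)
  have hd' (m : ℕ) := ascPochhammer_pos m d hd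
  refine (isEquivalent_iff_tendsto_one (Eventually.of_forall fun m => ?_)).mpr ?_
  · exact mul_ne_zero hL.ne' (div_ne_zero (hd' m).ne' (by positivity))
  have h := (tendsto_ascPochhammer_ratio ha hb hc hd habcd).div_const L
  rw [div_self hL.ne'] at h
  refine h.congr fun m => ?_
  simp only [Pi.div_apply]
  field_simp

theorem isEquivalent_ordinaryHypergeometric_nhdsLT_one {a b c d : ℝ} (ha : 0 < a) (hb : 0 < b)
    (hc : 0 < c) (hd : 0 < d) (habcd : a + b = c + d) :
    (₂F₁ a b c : ℝ → ℝ) ~[𝓝[<] 1] fun z =>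
      Real.Gamma c * Real.Gamma d / (Real.Gamma a * Real.Gamma b) * (1 - z) ^ (-d) := by
  have hcoef := isEquivalent_ordinaryHypergeometricCoefficient ha hb hc hd habcd
  have hL := Gamma_mul_div_Gamma_mul_pos ha hb hc hd
  set L := Real.Gamma c * Real.Gamma d / (Real.Gamma a * Real.Gamma b)
  have hv (m : ℕ) : 0 ≤ L * ((ascPochhammer ℝ m).eval d / m !) := by
    have := ascPochhammer_pos m d hd
    positivity
  have hball : ∀ᶠ z : ℝ in 𝓝[<] 1, |z| < 1 := by
    filter_upwards [Ioo_mem_nhdsLT zero_lt_one] with z hz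
    rw [abs_of_pos hz.1]
    exact hz.2
  have hlim : Tendsto (fun z : ℝ => L * (1 - z) ^ (-d)) (𝓝[<] 1) atTop :=
    ((tendsto_rpow_neg_nhdsGT_zero (neg_lt_zero.mpr hd)).comp
      tendsto_one_sub_nhdsLT_one).const_mul_atTop hL
  refine isEquivalent_of_hasSum_mul_pow hv hcoef ?_ ?_ hlim
  · exact hball.mono fun z hz => hasSum_of_hasFPowerSeriesOnBall_ofScalars
      (hasFPowerSeriesOnBall_ordinaryHypergeometric a b c) (mem_eball_zero_one_iff.mpr hz)
  · filter_upwards [hball] with z hz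
    simpa only [mul_assoc] using (hasSum_ascPochhammer_mul_pow d hz).mul_left L

end Hypergeometric

section SeparableLaplacian

open Topology InnerProductSpace
open scoped Gradient RealInnerProductSpace Laplacian

section SecondDerivative

variable {𝕜 E : Type*} [NontriviallyNormedField 𝕜] [NormedAddCommGroup E] [NormedSpace 𝕜 E]
  {f g : E → 𝕜} {x : E}

theorem eventually_differentiableAt_of_contDiffAt_two (hf : ContDiffAt 𝕜 2 f x) :
    ∀ᶠ y in 𝓝 x, DifferentiableAt 𝕜 f y :=
  (hf.eventually (by simp)).mono fun _ hy => hy.differentiableAt two_ne_zero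

theorem differentiableAt_fderiv_of_contDiffAt_two (hf : ContDiffAt 𝕜 2 f x) :
    DifferentiableAt 𝕜 (fderiv 𝕜 f) x :=
  (hf.fderiv_right (m := 1) (by norm_num)).differentiableAt one_ne_zero

theorem differentiableAt_deriv_of_contDiffAt_two {φ : 𝕜 → 𝕜} {z : 𝕜} (hφ : ContDiffAt 𝕜 2 φ z) :
    DifferentiableAt 𝕜 (deriv φ) z :=
  (differentiableAt_fderiv_of_contDiffAt_two hφ).clm_apply (differentiableAt_const 1)

theorem iteratedFDeriv_two_mul (hf : ContDiffAt 𝕜 2 f x) (hg : ContDiffAt 𝕜 2 g x) (v w : E) :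
    iteratedFDeriv 𝕜 2 (fun y => f y * g y) x ![v, w] =
      f x * iteratedFDeriv 𝕜 2 g x ![v, w] + fderiv 𝕜 f x v * fderiv 𝕜 g x w
        + fderiv 𝕜 g x v * fderiv 𝕜 f x w + g x * iteratedFDeriv 𝕜 2 f x ![v, w] := by
  have hfderiv : fderiv 𝕜 (fun y => f y * g y) =ᶠ[𝓝 x]
      fun y => f y • fderiv 𝕜 g y + g y • fderiv 𝕜 f y := by
    filter_upwards [eventually_differentiableAt_of_contDiffAt_two hf,
      eventually_differentiableAt_of_contDiffAt_two hg] with y hfy hgy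
    exact fderiv_fun_mul hfy hgy
  have hfd := hf.differentiableAt two_ne_zero
  have hgd := hg.differentiableAt two_ne_zero
  have hfdd := differentiableAt_fderiv_of_contDiffAt_two hf
  have hgdd := differentiableAt_fderiv_of_contDiffAt_two hg
  simp only [iteratedFDeriv_two_apply, Matrix.cons_val_zero, Matrix.cons_val_one,
    hfderiv.fderiv_eq]
  rw [fderiv_fun_add (hfd.fun_smul hgdd) (hgd.fun_smul hfdd), fderiv_fun_smul hfd hgdd,
    fderiv_fun_smul hgd hfdd]
  simp only [add_apply, smul_apply, ContinuousLinearMap.smulRight_apply, smul_eq_mul]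
  ring

theorem iteratedFDeriv_two_comp {φ : 𝕜 → 𝕜} (hφ : ContDiffAt 𝕜 2 φ (f x))
    (hf : ContDiffAt 𝕜 2 f x) (v w : E) :
    iteratedFDeriv 𝕜 2 (fun y => φ (f y)) x ![v, w] =
      deriv (deriv φ) (f x) * (fderiv 𝕜 f x v * fderiv 𝕜 f x w)
        + deriv φ (f x) * iteratedFDeriv 𝕜 2 f x ![v, w] := by
  have hfderiv : fderiv 𝕜 (fun y => φ (f y)) =ᶠ[𝓝 x] fun y => deriv φ (f y) • fderiv 𝕜 f y := by
    filter_upwards [eventually_differentiableAt_of_contDiffAt_two hf, hf.continuousAt.eventually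
      (eventually_differentiableAt_of_contDiffAt_two hφ)] with y hfy hφy
    exact (hφy.hasDerivAt.comp_hasFDerivAt y hfy.hasFDerivAt).fderiv
  have hφ' := differentiableAt_deriv_of_contDiffAt_two hφ
  have hfd := hf.differentiableAt two_ne_zero
  have hcomp : HasFDerivAt (fun y => deriv φ (f y)) (deriv (deriv φ) (f x) • fderiv 𝕜 f x) x :=
    hφ'.hasDerivAt.comp_hasFDerivAt x hfd.hasFDerivAt
  simp only [iteratedFDeriv_two_apply, Matrix.cons_val_zero, Matrix.cons_val_one,
    hfderiv.fderiv_eq]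
  rw [fderiv_fun_smul hcomp.differentiableAt (differentiableAt_fderiv_of_contDiffAt_two hf),
    hcomp.fderiv]
  simp only [add_apply, smul_apply, ContinuousLinearMap.smulRight_apply, smul_eq_mul]
  ring

end SecondDerivative

section NormRpow

variable {E : Type*}

theorem norm_sq_rpow [SeminormedAddCommGroup E] (x : E) (p : ℝ) :
    (‖x‖ ^ 2) ^ p = ‖x‖ ^ (2 * p) := by
  rw [← Real.rpow_natCast_mul (norm_nonneg x), Nat.cast_ofNat]

theorem norm_rpow_eq_norm_sq_rpow [SeminormedAddCommGroup E] (s : ℝ) :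
    (fun y : E => ‖y‖ ^ s) = fun y => (‖y‖ ^ 2) ^ (s / 2) := by
  ext y
  rw [norm_sq_rpow, mul_div_cancel₀ s two_ne_zero]

variable [NormedAddCommGroup E] [InnerProductSpace ℝ E] {x : E}

theorem contDiffAt_norm_rpow (s : ℝ) (hx : x ≠ 0) : ContDiffAt ℝ 2 (fun y : E => ‖y‖ ^ s) x :=
  (contDiffAt_norm ℝ hx).rpow_const_of_ne (norm_ne_zero_iff.mpr hx)

theorem contDiffAt_inner_div_norm (e : E) (hx : x ≠ 0) :
    ContDiffAt ℝ 2 (fun y => ⟪e, y⟫ / ‖y‖) x :=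
  ((innerSL ℝ e).contDiff.contDiffAt).div (contDiffAt_norm ℝ hx) (norm_ne_zero_iff.mpr hx)

theorem inner_div_norm_eq_mul_rpow (e : E) :
    (fun y => ⟪e, y⟫ / ‖y‖) = fun y => ⟪e, y⟫ * ‖y‖ ^ (-1 : ℝ) := by
  ext y
  rw [Real.rpow_neg_one, div_eq_mul_inv]

end NormRpow

section Gradient

variable {E : Type*} [NormedAddCommGroup E] [InnerProductSpace ℝ E] [CompleteSpace E]
  {f g : E → ℝ} {f' g' x : E}

theorem hasGradientAt_mul (hf : HasGradientAt f f' x) (hg : HasGradientAt g g' x) :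
    HasGradientAt (fun y => f y * g y) (f x • g' + g x • f') x := by
  simpa [hasGradientAt_iff_hasFDerivAt] using hf.hasFDerivAt.fun_mul hg.hasFDerivAt

theorem hasGradientAt_comp {φ : ℝ → ℝ} {φ' : ℝ} (hφ : HasDerivAt φ φ' (f x))
    (hf : HasGradientAt f f' x) : HasGradientAt (fun y => φ (f y)) (φ' • f') x := by
  simpa [hasGradientAt_iff_hasFDerivAt, Function.comp_def] using
    hφ.comp_hasFDerivAt x hf.hasFDerivAt

theorem hasGradientAt_inner_left (e x : E) : HasGradientAt (fun y => ⟪e, y⟫) e x :=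
  (innerSL ℝ e).hasFDerivAt

theorem hasGradientAt_norm_sq (x : E) : HasGradientAt (fun y : E => ‖y‖ ^ 2) ((2 : ℝ) • x) x := by
  rw [hasGradientAt_iff_hasFDerivAt, map_smul, ofNat_smul_eq_nsmul]
  exact (hasStrictFDerivAt_norm_sq x).hasFDerivAt

theorem hasGradientAt_norm_rpow (s : ℝ) (hx : x ≠ 0) :
    HasGradientAt (fun y : E => ‖y‖ ^ s) ((s * ‖x‖ ^ (s - 2)) • x) x := by
  have hx₀ : ‖x‖ ^ 2 ≠ 0 := pow_ne_zero 2 (norm_ne_zero_iff.mpr hx)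
  have h := hasGradientAt_comp (f := fun y : E => ‖y‖ ^ 2)
    (Real.hasDerivAt_rpow_const (p := s / 2) (Or.inl hx₀)) (hasGradientAt_norm_sq x)
  rw [norm_rpow_eq_norm_sq_rpow]
  convert h using 1
  rw [smul_smul, norm_sq_rpow]
  ring_nf

end Gradient

/-- The Laplace–Beltrami operator of the unit sphere in dimension `N`, applied to the function
`ω ↦ k ⟪e, ω⟫` of the height over a fixed unit vector `e` and written in terms of the height `t`.
The dimension is a real parameter. -/
noncomputable def zonalLaplacian (N : ℝ) (k : ℝ → ℝ) (t : ℝ) : ℝ :=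
  (1 - t ^ 2) * deriv (deriv k) t - (N - 1) * t * deriv k t

section Laplacian

variable {E : Type*} [NormedAddCommGroup E] [InnerProductSpace ℝ E] [FiniteDimensional ℝ E]
  {f g : E → ℝ} {e x : E}

theorem sum_fderiv_mul_fderiv {ι : Type*} [Fintype ι] (b : OrthonormalBasis ι ℝ E) (f g : E → ℝ)
    (x : E) : ∑ i, fderiv ℝ f x (b i) * fderiv ℝ g x (b i) = ⟪∇ f x, ∇ g x⟫ := by
  rw [← b.sum_inner_mul_inner]
  refine Finset.sum_congr rfl fun i _ => ?_
  rw [real_inner_comm (∇ g x), inner_gradient_left, inner_gradient_left]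

theorem laplacian_mul (hf : ContDiffAt ℝ 2 f x) (hg : ContDiffAt ℝ 2 g x) :
    Δ (fun y => f y * g y) x = f x * Δ g x + 2 * ⟪∇ f x, ∇ g x⟫ + g x * Δ f x := by
  simp only [laplacian_eq_iteratedFDeriv_stdOrthonormalBasis, iteratedFDeriv_two_mul hf hg,
    Finset.sum_add_distrib, ← Finset.mul_sum, sum_fderiv_mul_fderiv, real_inner_comm (∇ f x)]
  ring

theorem laplacian_comp {φ : ℝ → ℝ} (hφ : ContDiffAt ℝ 2 φ (f x)) (hf : ContDiffAt ℝ 2 f x) :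
    Δ (fun y => φ (f y)) x =
      deriv (deriv φ) (f x) * ‖∇ f x‖ ^ 2 + deriv φ (f x) * Δ f x := by
  simp only [laplacian_eq_iteratedFDeriv_stdOrthonormalBasis, iteratedFDeriv_two_comp hφ hf,
    Finset.sum_add_distrib, ← Finset.mul_sum, sum_fderiv_mul_fderiv, real_inner_self_eq_norm_sq]

theorem laplacian_inner_left (e x : E) : Δ (fun y => ⟪e, y⟫) x = 0 := by
  have h : fderiv ℝ (fun y => ⟪e, y⟫) = fun _ => innerSL ℝ e :=
    funext fun y => (innerSL ℝ e).fderiv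
  simp [laplacian_eq_iteratedFDeriv_stdOrthonormalBasis, iteratedFDeriv_two_apply, h]

theorem laplacian_norm_sq (x : E) : Δ (fun y : E => ‖y‖ ^ 2) x = 2 * Module.finrank ℝ E := by
  have hfderiv : fderiv ℝ (fun y : E => ‖y‖ ^ 2) = ⇑(2 • innerSL ℝ (E := E)) :=
    funext fun y => (hasStrictFDerivAt_norm_sq y).hasFDerivAt.fderiv
  have hhessian (v : E) : iteratedFDeriv ℝ 2 (fun y : E => ‖y‖ ^ 2) x ![v, v] = 2 * ‖v‖ ^ 2 := by
    rw [iteratedFDeriv_two_apply, hfderiv, ContinuousLinearMap.fderiv, ← real_inner_self_eq_norm_sq,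
      ← ofNat_smul_eq_nsmul ℝ]
    rfl
  simp [laplacian_eq_iteratedFDeriv_stdOrthonormalBasis, hhessian, mul_comm]

theorem laplacian_norm_rpow (s : ℝ) (hx : x ≠ 0) :
    Δ (fun y : E => ‖y‖ ^ s) x = s * (s + Module.finrank ℝ E - 2) * ‖x‖ ^ (s - 2) := by
  have hx₀ : ‖x‖ ^ 2 ≠ 0 := pow_ne_zero 2 (norm_ne_zero_iff.mpr hx)
  rw [norm_rpow_eq_norm_sq_rpow, laplacian_comp (f := fun y : E => ‖y‖ ^ 2)
    (φ := fun u => u ^ (s / 2)) (Real.contDiffAt_rpow_const_of_ne hx₀)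
    (contDiff_norm_sq ℝ).contDiffAt]
  simp only [Real.deriv_rpow_const', deriv_const_mul_field, (hasGradientAt_norm_sq x).gradient,
    norm_smul, laplacian_norm_sq, mul_pow]
  rw [Real.rpow_sub_one hx₀, norm_sq_rpow]
  field_simp
  norm_num
  ring_nf

theorem gradient_inner_div_norm (e : E) (hx : x ≠ 0) :
    ∇ (fun y => ⟪e, y⟫ / ‖y‖) x = ‖x‖⁻¹ • e - (⟪e, x⟫ / ‖x‖ ^ 3) • x := by
  rw [inner_div_norm_eq_mul_rpow,
    (hasGradientAt_mul (hasGradientAt_inner_left e x) (hasGradientAt_norm_rpow (-1) hx)).gradient,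
    Real.rpow_neg_one, smul_smul, show (-1 - 2 : ℝ) = -(3 : ℕ) by norm_num,
    Real.rpow_neg (norm_nonneg x), Real.rpow_natCast, add_comm, sub_eq_add_neg, ← neg_smul]
  ring_nf

theorem inner_gradient_inner_div_norm (e : E) (hx : x ≠ 0) :
    ⟪x, ∇ (fun y => ⟪e, y⟫ / ‖y‖) x⟫ = 0 := by
  have hx₀ := norm_ne_zero_iff.mpr hx
  rw [gradient_inner_div_norm e hx, inner_sub_right, inner_smul_right, inner_smul_right,
    real_inner_self_eq_norm_sq, real_inner_comm]
  field_simp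
  ring

theorem norm_gradient_inner_div_norm_sq (e : E) (hx : x ≠ 0) :
    ‖∇ (fun y => ⟪e, y⟫ / ‖y‖) x‖ ^ 2 = (‖e‖ ^ 2 - (⟪e, x⟫ / ‖x‖) ^ 2) / ‖x‖ ^ 2 := by
  have hx₀ := norm_ne_zero_iff.mpr hx
  rw [gradient_inner_div_norm e hx, norm_sub_sq_real, inner_smul_left, inner_smul_right,
    norm_smul, norm_smul, mul_pow, mul_pow]
  simp only [Real.norm_eq_abs, sq_abs, conj_trivial]
  field_simp
  ring

theorem laplacian_inner_div_norm (e : E) (hx : x ≠ 0) :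
    Δ (fun y => ⟪e, y⟫ / ‖y‖) x = -(Module.finrank ℝ E - 1) * (⟪e, x⟫ / ‖x‖) / ‖x‖ ^ 2 := by
  have hx₀ := norm_ne_zero_iff.mpr hx
  rw [inner_div_norm_eq_mul_rpow,
    laplacian_mul (f := fun y => ⟪e, y⟫) (innerSL ℝ e).contDiff.contDiffAt
      (contDiffAt_norm_rpow (-1) hx),
    laplacian_norm_rpow _ hx, laplacian_inner_left, (hasGradientAt_inner_left e x).gradient,
    (hasGradientAt_norm_rpow _ hx).gradient, inner_smul_right,
    show (-1 - 2 : ℝ) = -(3 : ℕ) by norm_num, Real.rpow_neg (norm_nonneg x), Real.rpow_natCast]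
  field_simp
  ring

theorem laplacian_norm_rpow_mul_comp_inner_div_norm (he : ‖e‖ = 1) (s : ℝ) {k : ℝ → ℝ}
    (hx : x ≠ 0) (hk : ContDiffAt ℝ 2 k (⟪e, x⟫ / ‖x‖)) :
    Δ (fun y => ‖y‖ ^ s * k (⟪e, y⟫ / ‖y‖)) x = ‖x‖ ^ (s - 2) *
      (zonalLaplacian (Module.finrank ℝ E) k (⟪e, x⟫ / ‖x‖)
        + s * (s + Module.finrank ℝ E - 2) * k (⟪e, x⟫ / ‖x‖)) := by
  have hx₀ := norm_ne_zero_iff.mpr hx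
  have hp := contDiffAt_inner_div_norm e hx
  have hpow : ‖x‖ ^ (s - 2) = ‖x‖ ^ s / ‖x‖ ^ 2 := mod_cast Real.rpow_sub_natCast hx₀ s 2
  have hcross : ⟪∇ (fun y : E => ‖y‖ ^ s) x, ∇ (fun y => k (⟪e, y⟫ / ‖y‖)) x⟫ = 0 := by
    rw [(hasGradientAt_norm_rpow s hx).gradient,
      (hasGradientAt_comp (f := fun y => ⟪e, y⟫ / ‖y‖) (φ := k)
        (hk.differentiableAt two_ne_zero).hasDerivAt
        (hp.differentiableAt two_ne_zero).hasGradientAt).gradient,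
      inner_smul_left, inner_smul_right, inner_gradient_inner_div_norm e hx, mul_zero, mul_zero]
  rw [laplacian_mul (g := fun y => k (⟪e, y⟫ / ‖y‖)) (contDiffAt_norm_rpow s hx)
    (hk.comp x hp), hcross, laplacian_comp (f := fun y => ⟪e, y⟫ / ‖y‖) hk hp,
    norm_gradient_inner_div_norm_sq e hx, laplacian_inner_div_norm e hx, laplacian_norm_rpow s hx,
    he, hpow, zonalLaplacian]
  ring

theorem laplacian_add_hardy_eq_zero (he : ‖e‖ = 1) {μ s : ℝ} {k : ℝ → ℝ} (hx : x ≠ 0)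
    (hk : ContDiffAt ℝ 2 k (⟪e, x⟫ / ‖x‖))
    (hode : zonalLaplacian (Module.finrank ℝ E) k (⟪e, x⟫ / ‖x‖)
      + μ / (⟪e, x⟫ / ‖x‖) ^ 2 * k (⟪e, x⟫ / ‖x‖)
      + s * (s + Module.finrank ℝ E - 2) * k (⟪e, x⟫ / ‖x‖) = 0) :
    Δ (fun y => ‖y‖ ^ s * k (⟪e, y⟫ / ‖y‖)) x
      + μ / ⟪e, x⟫ ^ 2 * (‖x‖ ^ s * k (⟪e, x⟫ / ‖x‖)) = 0 := by
  have hx₀ := norm_ne_zero_iff.mpr hx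
  have hpow : ‖x‖ ^ s = ‖x‖ ^ (s - 2) * ‖x‖ ^ 2 := by
    rw [← Real.rpow_add_natCast hx₀, Nat.cast_ofNat, sub_add_cancel]
  have hhardy : μ / (⟪e, x⟫ / ‖x‖) ^ 2 = μ / ⟪e, x⟫ ^ 2 * ‖x‖ ^ 2 := by
    rw [div_pow, div_div_eq_mul_div, mul_div_right_comm]
  rw [laplacian_norm_rpow_mul_comp_inner_div_norm he s hx hk, hpow]
  linear_combination ‖x‖ ^ (s - 2) * (hode - k (⟪e, x⟫ / ‖x‖) * hhardy)

end Laplacian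

end SeparableLaplacian

section AngularProfile

open Asymptotics Filter Topology

theorem hasDerivAt_rpow_mul_comp_one_sub_sq (α : ℝ) {F : ℝ → ℝ} {F' t : ℝ} (ht : t ≠ 0)
    (hF : HasDerivAt F F' (1 - t ^ 2)) :
    HasDerivAt (fun s => s ^ α * F (1 - s ^ 2))
      (α * (t ^ (α - 1) * F (1 - t ^ 2)) - 2 * (t ^ (α + 1) * F')) t := by
  have hsq : HasDerivAt (fun s : ℝ => 1 - s ^ 2) (-(2 * t)) t := by
    simpa using (hasDerivAt_pow 2 t).const_sub 1
  refine ((Real.hasDerivAt_rpow_const (Or.inl ht)).mul (hF.comp t hsq)).congr_deriv ?_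
  rw [Real.rpow_add_one ht, Function.comp_apply]
  ring

theorem zonalLaplacian_rpow_mul_comp_one_sub_sq (N α : ℝ) {F : ℝ → ℝ} {t : ℝ} (ht : t ≠ 0)
    (hF : ContDiffAt ℝ 2 F (1 - t ^ 2)) :
    zonalLaplacian N (fun s => s ^ α * F (1 - s ^ 2)) t =
      4 * t ^ α * ((1 - t ^ 2) * t ^ 2 * deriv (deriv F) (1 - t ^ 2)
        + ((N - 1) / 2 - (α + N / 2) * (1 - t ^ 2)) * deriv F (1 - t ^ 2))
        + (α * (α - 1) / t ^ 2 - α * (α + N - 2)) * (t ^ α * F (1 - t ^ 2)) := by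
  have hsq : ContinuousAt (fun s : ℝ => 1 - s ^ 2) t := by fun_prop
  have hderiv : deriv (fun s => s ^ α * F (1 - s ^ 2)) =ᶠ[𝓝 t] fun s =>
      α * (s ^ (α - 1) * F (1 - s ^ 2)) - 2 * (s ^ (α + 1) * deriv F (1 - s ^ 2)) := by
    filter_upwards [eventually_ne_nhds ht,
      hsq.eventually (eventually_differentiableAt_of_contDiffAt_two hF)] with s hs hFs
    exact (hasDerivAt_rpow_mul_comp_one_sub_sq α hs hFs.hasDerivAt).deriv
  have hF' := (hF.differentiableAt two_ne_zero).hasDerivAt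
  have hF'' := (differentiableAt_deriv_of_contDiffAt_two hF).hasDerivAt
  have hderiv₂ := ((hasDerivAt_rpow_mul_comp_one_sub_sq (α - 1) ht hF').const_mul α).sub
    ((hasDerivAt_rpow_mul_comp_one_sub_sq (α + 1) ht hF'').const_mul 2)
  rw [zonalLaplacian, (hderiv₂.congr_of_eventuallyEq hderiv).deriv, hderiv.self_of_nhds]
  simp only [Real.rpow_add_one ht, Real.rpow_sub_one ht, sub_add_cancel]
  field_simp
  ring

/-- The solution `k` of the angular equation `zonalLaplacian N k + (μ / t²) k + γ (γ + N - 2) k = 0`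
which is regular at the pole `t = 1`, where `α` is a root of `α² - α + μ`. -/
noncomputable def angularProfile (N α γ t : ℝ) : ℝ :=
  t ^ α * ₂F₁ ((α - γ) / 2) ((α + γ + N - 2) / 2) ((N - 1) / 2) (1 - t ^ 2)

variable {N α γ t : ℝ}

theorem norm_one_sub_sq_lt_one (ht : t ∈ Ioc 0 1) : ‖1 - t ^ 2‖ < 1 := by
  rw [Real.norm_eq_abs, abs_lt]
  constructor <;> nlinarith [ht.1, ht.2]

theorem contDiffAt_angularProfile (N α γ : ℝ) (ht : t ∈ Ioc 0 1) :
    ContDiffAt ℝ 2 (angularProfile N α γ) t := by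
  have hF : ContDiffAt ℝ 2
      (₂F₁ ((α - γ) / 2) ((α + γ + N - 2) / 2) ((N - 1) / 2) : ℝ → ℝ) (1 - t ^ 2) :=
    (analyticAt_ordinaryHypergeometric _ _ _ (norm_one_sub_sq_lt_one ht)).contDiffAt
  exact (Real.contDiffAt_rpow_const_of_ne ht.1.ne').mul
    (hF.comp t (by fun_prop : ContDiffAt ℝ 2 (fun s : ℝ => 1 - s ^ 2) t))

theorem angularProfile_ode (hN : 1 < N) {μ : ℝ} (hα : α ^ 2 - α + μ = 0) (γ : ℝ)
    (ht : t ∈ Ioc 0 1) :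
    zonalLaplacian N (angularProfile N α γ) t + μ / t ^ 2 * angularProfile N α γ t
      + γ * (γ + N - 2) * angularProfile N α γ t = 0 := by
  have hz := norm_one_sub_sq_lt_one ht
  have hc (m : ℕ) : (N - 1) / 2 + (m : ℝ) ≠ 0 := by
    have := m.cast_nonneg (α := ℝ)
    linarith
  have hode := ordinaryHypergeometric_ode ((α - γ) / 2) ((α + γ + N - 2) / 2) hc hz
  have hzonal : zonalLaplacian N (angularProfile N α γ) t = _ :=
    zonalLaplacian_rpow_mul_comp_one_sub_sq N α ht.1.ne' (analyticAt_ordinaryHypergeometric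
      ((α - γ) / 2) ((α + γ + N - 2) / 2) ((N - 1) / 2) hz).contDiffAt
  rw [angularProfile]
  linear_combination hzonal + 4 * t ^ α * hode + (t ^ α *
    ₂F₁ ((α - γ) / 2) ((α + γ + N - 2) / 2) ((N - 1) / 2) (1 - t ^ 2)) / t ^ 2 * hα

theorem angularProfile_pos (hN : 1 < N) (h₁ : 0 < α - γ) (h₂ : 0 < α + γ + N - 2)
    (ht : t ∈ Ioc 0 1) : 0 < angularProfile N α γ t :=
  mul_pos (Real.rpow_pos_of_pos ht.1 α) <|
    ordinaryHypergeometric_pos (by linarith) (by linarith) (by linarith)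
      (by nlinarith [ht.1, ht.2]) (by nlinarith [ht.1])

theorem tendsto_one_sub_sq_nhdsGT_zero :
    Tendsto (fun t : ℝ => 1 - t ^ 2) (𝓝[>] 0) (𝓝[<] 1) := by
  have h : Tendsto (fun t : ℝ => 1 - t ^ 2) (𝓝 0) (𝓝 1) :=
    Continuous.tendsto' (by fun_prop) _ _ (by norm_num)
  refine tendsto_nhdsWithin_of_tendsto_nhds_of_eventually_within _
    (h.mono_left nhdsWithin_le_nhds) ?_
  filter_upwards [self_mem_nhdsWithin] with t (ht : 0 < t)
  exact sub_lt_self 1 (pow_pos ht 2)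

theorem tendsto_angularProfile_div_rpow (hN : 1 < N) (hα : 1 / 2 < α) (h₁ : 0 < α - γ)
    (h₂ : 0 < α + γ + N - 2) :
    Tendsto (fun t => angularProfile N α γ t / t ^ (1 - α)) (𝓝[>] 0)
      (𝓝 (Real.Gamma ((N - 1) / 2) * Real.Gamma (α - 1 / 2) /
        (Real.Gamma ((α - γ) / 2) * Real.Gamma ((α + γ + N - 2) / 2)))) := by
  have hequiv := (isEquivalent_ordinaryHypergeometric_nhdsLT_one (a := (α - γ) / 2)
    (b := (α + γ + N - 2) / 2) (c := (N - 1) / 2) (d := α - 1 / 2) (by linarith) (by linarith)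
    (by linarith) (by linarith) (by ring)).comp_tendsto tendsto_one_sub_sq_nhdsGT_zero
  have hquot := hequiv.div (IsEquivalent.refl (u := fun t : ℝ => t ^ (1 - 2 * α)))
  refine (hquot.congr_right ?_).tendsto_const.congr' ?_
  · filter_upwards [self_mem_nhdsWithin] with t (ht : 0 < t)
    have hpow : (t ^ 2) ^ (-(α - 1 / 2)) = t ^ (1 - 2 * α) := by
      rw [← Real.rpow_natCast_mul ht.le]
      ring_nf
    simp only [Pi.div_apply, Function.comp_apply, sub_sub_cancel, hpow, Function.const_apply]
    exact mul_div_cancel_right₀ _ (Real.rpow_pos_of_pos ht _).ne'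
  · filter_upwards [self_mem_nhdsWithin] with t (ht : 0 < t)
    have hpow : t ^ (1 - α) = t ^ α * t ^ (1 - 2 * α) := by
      rw [← Real.rpow_add ht]
      ring_nf
    simp only [Pi.div_apply, Function.comp_apply, angularProfile, hpow]
    exact (mul_div_mul_left _ _ (Real.rpow_pos_of_pos ht α).ne').symm

theorem exists_pos_tendsto_angularProfile_div_rpow (hN : 1 < N) (hα : 1 / 2 < α) (h₁ : 0 < α - γ)
    (h₂ : 0 < α + γ + N - 2) :
    ∃ l > 0, Tendsto (fun t => angularProfile N α γ t / t ^ (1 - α)) (𝓝[>] 0) (𝓝 l) :=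
  ⟨_, Gamma_mul_div_Gamma_mul_pos (by linarith) (by linarith) (by linarith) (by linarith),
    tendsto_angularProfile_div_rpow hN hα h₁ h₂⟩

end AngularProfile

section HalfSpace

open InnerProductSpace
open scoped RealInnerProductSpace Laplacian

theorem inner_div_norm_mem_Ioc {E : Type*} [NormedAddCommGroup E] [InnerProductSpace ℝ E]
    {e x : E} (he : ‖e‖ = 1) (hx : 0 < ⟪e, x⟫) : ⟪e, x⟫ / ‖x‖ ∈ Ioc 0 1 := by
  have hle : ⟪e, x⟫ ≤ ‖x‖ := by simpa only [he, one_mul] using real_inner_le_norm e x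
  have hx₀ : 0 < ‖x‖ := hx.trans_le hle
  exact ⟨div_pos hx hx₀, (div_le_one hx₀).mpr hle⟩

theorem lap_eq_laplacian {n : ℕ} (u : EuclideanSpace ℝ (Fin n) → ℝ) : lap u = Δ u := by
  ext x
  simp only [lap, EuclideanSpace.basisFun_apply,
    laplacian_eq_iteratedFDeriv_orthonormalBasis u (EuclideanSpace.basisFun (Fin n) ℝ)]

variable {n : ℕ} {k : ℝ → ℝ} {x : EuclideanSpace ℝ (Fin n)}

theorem exists_x1_eq_inner (hn : 0 < n) :
    ∃ e : EuclideanSpace ℝ (Fin n), ‖e‖ = 1 ∧ x1 = fun x => ⟪e, x⟫ := by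
  refine ⟨EuclideanSpace.single ⟨0, hn⟩ 1, by simp, funext fun x => ?_⟩
  simp [x1, hn, EuclideanSpace.inner_single_left]

theorem pos_of_mem_halfSpace (hx : x ∈ halfSpace n) : 0 < n := by
  by_contra hn
  have hx' : 0 < x1 x := hx
  simp [x1, hn] at hx'

theorem ne_zero_of_mem_halfSpace (hx : x ∈ halfSpace n) : x ≠ 0 := by
  rintro rfl
  simp [halfSpace, x1] at hx

theorem x1_div_norm_mem_Ioc (hx : x ∈ halfSpace n) : x1 x / ‖x‖ ∈ Ioc 0 1 := by
  have hx₁ : 0 < x1 x := hx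
  obtain ⟨e, he, hx1⟩ := exists_x1_eq_inner (pos_of_mem_halfSpace hx)
  rw [hx1] at hx₁ ⊢
  exact inner_div_norm_mem_Ioc he hx₁

theorem contDiffOn_norm_rpow_mul_comp_x1_div_norm (hk : ∀ t ∈ Ioc 0 1, ContDiffAt ℝ 2 k t)
    (s : ℝ) : ContDiffOn ℝ 2 (fun x => ‖x‖ ^ s * k (x1 x / ‖x‖)) (halfSpace n) := fun x hx => by
  have hx₀ := ne_zero_of_mem_halfSpace hx
  have hkx := hk _ (x1_div_norm_mem_Ioc hx)
  obtain ⟨e, -, hx1⟩ := exists_x1_eq_inner (pos_of_mem_halfSpace hx)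
  simp only [hx1] at hkx ⊢
  exact ((contDiffAt_norm_rpow s hx₀).mul
    (hkx.comp x (contDiffAt_inner_div_norm e hx₀))).contDiffWithinAt

theorem norm_rpow_mul_comp_x1_div_norm_pos (hk : ∀ t ∈ Ioc 0 1, 0 < k t) (s : ℝ)
    (hx : x ∈ halfSpace n) : 0 < ‖x‖ ^ s * k (x1 x / ‖x‖) :=
  mul_pos (Real.rpow_pos_of_pos (norm_pos_iff.mpr (ne_zero_of_mem_halfSpace hx)) s)
    (hk _ (x1_div_norm_mem_Ioc hx))

theorem lap_add_hardy_eq_zero {μ s : ℝ} (hk : ∀ t ∈ Ioc 0 1, ContDiffAt ℝ 2 k t)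
    (hode : ∀ t ∈ Ioc (0 : ℝ) 1, zonalLaplacian n k t + μ / t ^ 2 * k t + Lam n s * k t = 0)
    (hx : x ∈ halfSpace n) :
    lap (fun x => ‖x‖ ^ s * k (x1 x / ‖x‖)) x
      + μ / x1 x ^ 2 * (‖x‖ ^ s * k (x1 x / ‖x‖)) = 0 := by
  have hx₀ := ne_zero_of_mem_halfSpace hx
  have ht := x1_div_norm_mem_Ioc hx
  have hkx := hk _ ht
  have hodex := hode _ ht
  obtain ⟨e, he, hx1⟩ := exists_x1_eq_inner (pos_of_mem_halfSpace hx)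
  simp only [lap_eq_laplacian, hx1] at hkx hodex ⊢
  exact laplacian_add_hardy_eq_zero he hx₀ hkx (by simpa only [finrank_euclideanSpace_fin])

end HalfSpace

section Exponents

theorem Lam_neg_sub (n : ℕ) (γ : ℝ) : Lam n (-(γ + n - 2)) = Lam n γ := by
  simp only [Lam]
  ring

theorem aPlus_sq_sub_add {μ : ℝ} (hμ : μ ≤ 1 / 4) : aPlus μ ^ 2 - aPlus μ + μ = 0 := by
  have h := Real.sq_sqrt (sub_nonneg.mpr hμ)
  rw [aPlus]
  linear_combination h

theorem half_lt_aPlus {μ : ℝ} (hμ : μ < 1 / 4) : 1 / 2 < aPlus μ :=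
  lt_add_of_pos_right _ (Real.sqrt_pos.mpr (sub_pos.mpr hμ))

theorem aMinus_eq_one_sub_aPlus (μ : ℝ) : aMinus μ = 1 - aPlus μ := by
  rw [aMinus, aPlus]
  ring

theorem pos_and_pos_of_mul_pos_of_add_pos {x y : ℝ} (hmul : 0 < x * y) (hadd : 0 < x + y) :
    0 < x ∧ 0 < y :=
  (pos_and_pos_or_neg_and_neg_of_mul_pos hmul).resolve_right fun h => by linarith [h.1, h.2]

theorem aPlus_sub_pos_and_add_pos {n : ℕ} {μ γ : ℝ} (hn : (1 : ℝ) ≤ n) (hμ : μ < 1 / 4)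
    (hγ : Lam n γ < Lam n (aPlus μ)) : 0 < aPlus μ - γ ∧ 0 < aPlus μ + γ + n - 2 := by
  have hα := half_lt_aPlus hμ
  refine pos_and_pos_of_mul_pos_of_add_pos ?_ (by linarith)
  simp only [Lam] at hγ
  linarith

end Exponents

/-- for `Λ(γ) < Λ(α₊)` there is a positive angular profile `k` on
`(0,1]`, `C²` on `(0,1)`, continuous at `1` with `k(1) > 0`, solving the angular
ODE and behaving like a positive multiple of `t^{α₋}` near `0`; the associated
functions `H₊ = |x|^γ k(x₁/|x|)` and `H₋ = |x|^{−(γ+n−2)} k(x₁/|x|)` are then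
positive `L_μ`-harmonics on the half-space. -/
theorem stmt7 (n : ℕ) (hn : 2 ≤ n) (μ γ : ℝ) (hμ : μ < 1 / 4)
    (hγ : Lam n γ < Lam n (aPlus μ)) :
    ∃ k : ℝ → ℝ,
      (∀ t ∈ Set.Ioc (0 : ℝ) 1, 0 < k t) ∧
      ContDiffOn ℝ 2 k (Set.Ioo 0 1) ∧
      ContinuousWithinAt k (Set.Ioc 0 1) 1 ∧ 0 < k 1 ∧
      (∀ t ∈ Set.Ioo (0 : ℝ) 1,
        (1 - t ^ 2) * deriv (deriv k) t - ((n : ℝ) - 1) * t * deriv k t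
          + (μ / t ^ 2) * k t + Lam n γ * k t = 0) ∧
      (∃ l > (0 : ℝ),
        Filter.Tendsto (fun t => k t / t ^ aMinus μ) (nhdsWithin 0 (Set.Ioi 0)) (nhds l)) ∧
      ContDiffOn ℝ 2
        (fun x : EuclideanSpace ℝ (Fin n) => ‖x‖ ^ γ * k (x1 x / ‖x‖)) (halfSpace n) ∧
      (∀ x ∈ halfSpace n, 0 < ‖x‖ ^ γ * k (x1 x / ‖x‖)) ∧
      (∀ x ∈ halfSpace n,
        lap (fun x : EuclideanSpace ℝ (Fin n) => ‖x‖ ^ γ * k (x1 x / ‖x‖)) x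
          + (μ / (x1 x) ^ 2) * (‖x‖ ^ γ * k (x1 x / ‖x‖)) = 0) ∧
      ContDiffOn ℝ 2
        (fun x : EuclideanSpace ℝ (Fin n) => ‖x‖ ^ (-(γ + (n : ℝ) - 2)) * k (x1 x / ‖x‖))
        (halfSpace n) ∧
      (∀ x ∈ halfSpace n, 0 < ‖x‖ ^ (-(γ + (n : ℝ) - 2)) * k (x1 x / ‖x‖)) ∧
      (∀ x ∈ halfSpace n,
        lap (fun x : EuclideanSpace ℝ (Fin n) => ‖x‖ ^ (-(γ + (n : ℝ) - 2)) * k (x1 x / ‖x‖)) x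
          + (μ / (x1 x) ^ 2) * (‖x‖ ^ (-(γ + (n : ℝ) - 2)) * k (x1 x / ‖x‖)) = 0) := by
  have hN : (1 : ℝ) < n := by exact_mod_cast hn
  have hα := half_lt_aPlus hμ
  obtain ⟨h₁, h₂⟩ := aPlus_sub_pos_and_add_pos hN.le hμ hγ
  have hC₂ (t) (ht : t ∈ Ioc 0 1) := contDiffAt_angularProfile n (aPlus μ) γ ht
  have hpos (t) (ht : t ∈ Ioc 0 1) := angularProfile_pos hN h₁ h₂ ht
  have hode (t) (ht : t ∈ Ioc 0 1) := angularProfile_ode hN (aPlus_sq_sub_add hμ.le) γ ht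
  have hone : (1 : ℝ) ∈ Ioc 0 1 := right_mem_Ioc.mpr one_pos
  exact ⟨angularProfile n (aPlus μ) γ, hpos,
    fun t ht => (hC₂ t (Ioo_subset_Ioc_self ht)).contDiffWithinAt,
    (hC₂ 1 hone).continuousAt.continuousWithinAt, hpos 1 hone,
    fun t ht => hode t (Ioo_subset_Ioc_self ht),
    aMinus_eq_one_sub_aPlus μ ▸ exists_pos_tendsto_angularProfile_div_rpow hN hα h₁ h₂,
    contDiffOn_norm_rpow_mul_comp_x1_div_norm hC₂ _,
    fun x => norm_rpow_mul_comp_x1_div_norm_pos hpos _,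
    fun x => lap_add_hardy_eq_zero hC₂ hode,
    contDiffOn_norm_rpow_mul_comp_x1_div_norm hC₂ _,
    fun x => norm_rpow_mul_comp_x1_div_norm_pos hpos _,
    fun x => lap_add_hardy_eq_zero hC₂ (by rw [Lam_neg_sub]; exact hode)⟩
end

section
/- Let n ≥ 2, −∞ < μ < 1/4 and 1 < p < p_KO, where p_KO := +∞ if 0 ≤ μ < 1/4 and p_KO := 1 − 2/α₋ if μ < 0. Then there exist constants 0 < c₁ < c₂ and a positive function v, twice continuously differentiable on (0,1), satisfying (1−t²)v''(t) − (n−1)t v'(t) + (μ/t²)v(t) + Λ(−2/(p−1))v(t) = v(t)^p for all t ∈ (0,1), and c₁ t^{α₋} < v(t) < c₂ t^{α₋} for all t ∈ (0,1]. -/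
open Real Set

/-!
Write a solution as `v = h w`, where `h` solves the linear inequality `L h ≥ q h` for the angular
operator `L`. The equation `L v = v ^ p` becomes the Sturm–Liouville equation
`(A h² w')' = -f(t, w)`, and `f` is monotone in `w` between `0` and `z / h` as soon as
`q ≥ p z ^ (p - 1)`. If moreover `z` is a supersolution and `z / h` is nondecreasing, then `z / h`
is mapped below itself by the monotone integral operator that inverts the left-hand side, so that
Knaster–Tarski gives a fixed point `w ≤ z / h`; it is bounded below by its value at `t = 0`, which
is the free constant `c` of the integral operator.

With `α = α₋`, both barriers are perturbations of `t ^ α`: `h = t ^ α exp(-K t ^ s)` and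
`z = M t ^ α exp(t ^ s)`. For small `s`, the gain `K t ^ (s - 2)` of the linear one dominates
`z ^ (p - 1) ≈ t ^ (α (p - 1))` because `α (p - 1) > -2`, which is the Keller–Osserman condition
`p < p_KO`.
-/

open MeasureTheory Filter Topology
open scoped ENNReal

theorem exists_fixedPoint_le_of_monotoneOn_Iic {α : Type*} [CompleteLattice α] {T : α → α} {b : α}
    (hT : MonotoneOn T (Iic b)) (hb : T b ≤ b) : ∃ x ≤ b, T x = x := by
  let S : α →o α :=
    ⟨fun x => T (x ⊓ b), fun x y hxy => hT inf_le_right inf_le_right (inf_le_inf_right b hxy)⟩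
  have hS : S.lfp ≤ b := S.lfp_le ((congrArg T (inf_idem b)).trans_le hb)
  exact ⟨S.lfp, hS, (congrArg T (inf_eq_left.2 hS)).symm.trans S.map_lfp⟩

theorem lintegral_Ioc_ofReal_le_sub_of_le_deriv {φ G : ℝ → ℝ} {x y : ℝ} (hxy : x ≤ y)
    (hφ : ContinuousOn φ (Icc x y)) (hφ₀ : ∀ t ∈ Icc x y, 0 ≤ φ t)
    (hG : ∀ t ∈ Icc x y, DifferentiableAt ℝ G t) (hφG : ∀ t ∈ Ioo x y, φ t ≤ deriv G t) :
    ∫⁻ t in Ioc x y, ENNReal.ofReal (φ t) ≤ ENNReal.ofReal (G y - G x) := by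
  have hint : IntegrableOn φ (Icc x y) := hφ.integrableOn_Icc
  have hnn : 0 ≤ᵐ[volume.restrict (Ioc x y)] φ :=
    (ae_restrict_mem measurableSet_Ioc).mono fun t ht => hφ₀ t (Ioc_subset_Icc_self ht)
  rw [← ofReal_integral_eq_lintegral_ofReal (hint.mono_set Ioc_subset_Icc_self) hnn,
    ← intervalIntegral.integral_of_le hxy]
  exact ENNReal.ofReal_le_ofReal <|
    intervalIntegral.integral_le_sub_of_hasDeriv_right_of_le hxy
      (fun t ht => (hG t ht).continuousAt.continuousWithinAt)
      (fun t ht => (hG t (Ioo_subset_Icc_self ht)).hasDerivAt.hasDerivWithinAt) hint hφG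

theorem lintegral_Ioo_ofReal_le_of_le_deriv {φ G : ℝ → ℝ} {x y C : ℝ}
    (hφ : ContinuousOn φ (Ioo x y)) (hφ₀ : ∀ t ∈ Ioo x y, 0 ≤ φ t)
    (hG : DifferentiableOn ℝ G (Ioo x y)) (hφG : ∀ t ∈ Ioo x y, φ t ≤ deriv G t)
    (hC : ∀ s ∈ Ioo x y, ∀ t ∈ Ioo x y, G t - G s ≤ C) :
    ∫⁻ t in Ioo x y, ENNReal.ofReal (φ t) ≤ ENNReal.ofReal C := by
  rcases le_or_gt y x with hyx | hxy
  · simp [Ioo_eq_empty_of_le hyx]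
  have hfst : Tendsto Prod.fst (𝓝[>] x ×ˢ 𝓝[<] y) (𝓝 x) :=
    (tendsto_nhds_of_tendsto_nhdsWithin tendsto_fst)
  have hsnd : Tendsto Prod.snd (𝓝[>] x ×ˢ 𝓝[<] y) (𝓝 y) :=
    (tendsto_nhds_of_tendsto_nhdsWithin tendsto_snd)
  have hmeas : AEMeasurable (fun t => ENNReal.ofReal (φ t)) (volume.restrict (Ioo x y)) :=
    (hφ.aemeasurable measurableSet_Ioo).ennreal_ofReal
  refine le_of_tendsto
    ((aecover_Ioo_of_Ioc hfst hsnd).lintegral_tendsto_of_countably_generated hmeas) ?_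
  obtain ⟨m, hxm, hmy⟩ := exists_between hxy
  filter_upwards [prod_mem_prod (Ioo_mem_nhdsGT hxm) (Ioo_mem_nhdsLT hmy)] with ⟨s, t⟩ ⟨hs, ht⟩
  have hst : s ≤ t := (hs.2.trans ht.1).le
  have hsub : Icc s t ⊆ Ioo x y := Icc_subset_Ioo hs.1 ht.2
  rw [Measure.restrict_restrict_of_subset (Ioc_subset_Icc_self.trans hsub)]
  calc ∫⁻ z in Ioc s t, ENNReal.ofReal (φ z)
      ≤ ENNReal.ofReal (G t - G s) :=
        lintegral_Ioc_ofReal_le_sub_of_le_deriv hst (hφ.mono hsub) (fun z hz => hφ₀ z (hsub hz))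
          (fun z hz => hG.differentiableAt (isOpen_Ioo.mem_nhds (hsub hz)))
          fun z hz => hφG z (hsub (Ioo_subset_Icc_self hz))
    _ ≤ ENNReal.ofReal C :=
        ENNReal.ofReal_le_ofReal (hC s (hsub (left_mem_Icc.2 hst)) t (hsub (right_mem_Icc.2 hst)))

theorem intervalIntegrable_of_lintegral_Ioo_ne_top {φ : ℝ → ℝ} {x y : ℝ} (hxy : x ≤ y)
    (hφ : AEStronglyMeasurable φ (volume.restrict (Ioo x y))) (hφ₀ : ∀ t ∈ Ioo x y, 0 ≤ φ t)
    (hfin : ∫⁻ t in Ioo x y, ENNReal.ofReal (φ t) ≠ ∞) : IntervalIntegrable φ volume x y := by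
  rw [intervalIntegrable_iff_integrableOn_Ioo_of_le hxy]
  exact (lintegral_ofReal_ne_top_iff_integrable hφ
    ((ae_restrict_mem measurableSet_Ioo).mono hφ₀)).1 hfin

theorem toReal_lintegral_Ioo_ofReal {φ : ℝ → ℝ} {x y : ℝ} (hxy : x ≤ y)
    (hφ : AEStronglyMeasurable φ (volume.restrict (Ioo x y))) (hφ₀ : ∀ t ∈ Ioo x y, 0 ≤ φ t) :
    (∫⁻ t in Ioo x y, ENNReal.ofReal (φ t)).toReal = ∫ t in x..y, φ t := by
  rw [intervalIntegral.integral_of_le hxy, integral_Ioc_eq_integral_Ioo,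
    integral_eq_lintegral_of_nonneg_ae ((ae_restrict_mem measurableSet_Ioo).mono hφ₀) hφ]

section SturmLiouville

variable {l r c : ℝ} {a u : ℝ → ℝ} {f : ℝ → ℝ → ℝ}

/-- A nondecreasing supersolution of the Sturm–Liouville equation `(a u')' = -f(t, u)` on `(l, r)`.
The flux `a u'` is only differentiated in the interior, but monotonicity is asked up to `r`, so
that `u r` bounds `u` from above. -/
structure IsMonotoneSupersolution (l r : ℝ) (a : ℝ → ℝ) (f : ℝ → ℝ → ℝ) (u : ℝ → ℝ) : Prop where
  monotoneOn : MonotoneOn u (Ioc l r)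
  differentiableOn : DifferentiableOn ℝ u (Ioo l r)
  differentiableOn_flux : DifferentiableOn ℝ (fun t => a t * deriv u t) (Ioo l r)
  deriv_flux_le : ∀ t ∈ Ioo l r, deriv (fun t => a t * deriv u t) t ≤ -f t (u t)

/-- The flux `∫_s^r f(τ, ω(τ)) dτ` that a solution of `(a ω')' = -f(t, ω)` with vanishing flux at
`r` has at `s`. Functions are `ℝ≥0∞`-valued so that the integral exists without any measurability
or integrability of `ω`. -/
noncomputable def lowerFlux (r : ℝ) (f : ℝ → ℝ → ℝ) (ω : ℝ → ℝ≥0∞) (s : ℝ) : ℝ≥0∞ :=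
  ∫⁻ τ in Ioo s r, ENNReal.ofReal (f τ (ω τ).toReal)

/-- The integral operator whose fixed points are the solutions of `(a ω')' = -f(t, ω)` with
`ω(l) = c` and vanishing flux at `r`. -/
noncomputable def sturmLiouvilleMap (l r c : ℝ) (a : ℝ → ℝ) (f : ℝ → ℝ → ℝ) (ω : ℝ → ℝ≥0∞)
    (t : ℝ) : ℝ≥0∞ :=
  ENNReal.ofReal c + ∫⁻ s in Ioo l t, lowerFlux r f ω s / ENNReal.ofReal (a s)

theorem lowerFlux_antitone (ω : ℝ → ℝ≥0∞) : Antitone (lowerFlux r f ω) := fun _ _ hst =>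
  lintegral_mono_set (Ioo_subset_Ioo_left hst)

theorem lowerFlux_mono (hu₀ : ∀ t ∈ Ioo l r, 0 ≤ u t)
    (hf_mono : ∀ t ∈ Ioo l r, MonotoneOn (f t) (Icc 0 (u t))) {ω₁ ω₂ : ℝ → ℝ≥0∞}
    (h₁₂ : ∀ t ∈ Ioo l r, ω₁ t ≤ ω₂ t) (h₂ : ∀ t ∈ Ioo l r, ω₂ t ≤ ENNReal.ofReal (u t))
    {s : ℝ} (hs : l ≤ s) : lowerFlux r f ω₁ s ≤ lowerFlux r f ω₂ s := by
  refine setLIntegral_mono' measurableSet_Ioo fun τ hτ => ENNReal.ofReal_le_ofReal ?_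
  replace hτ : τ ∈ Ioo l r := Ioo_subset_Ioo_left hs hτ
  have hle : (ω₁ τ).toReal ≤ (ω₂ τ).toReal :=
    ENNReal.toReal_mono (ne_top_of_le_ne_top ENNReal.ofReal_ne_top (h₂ τ hτ)) (h₁₂ τ hτ)
  have h₂u : (ω₂ τ).toReal ≤ u τ := ENNReal.toReal_le_of_le_ofReal (hu₀ τ hτ) (h₂ τ hτ)
  exact hf_mono τ hτ ⟨ENNReal.toReal_nonneg, hle.trans h₂u⟩ ⟨ENNReal.toReal_nonneg, h₂u⟩ hle

theorem sturmLiouvilleMap_mono (hu₀ : ∀ t ∈ Ioo l r, 0 ≤ u t)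
    (hf_mono : ∀ t ∈ Ioo l r, MonotoneOn (f t) (Icc 0 (u t))) {ω₁ ω₂ : ℝ → ℝ≥0∞}
    (h₁₂ : ∀ t ∈ Ioo l r, ω₁ t ≤ ω₂ t) (h₂ : ∀ t ∈ Ioo l r, ω₂ t ≤ ENNReal.ofReal (u t)) :
    sturmLiouvilleMap l r c a f ω₁ ≤ sturmLiouvilleMap l r c a f ω₂ := fun _ =>
  add_le_add le_rfl <| setLIntegral_mono' measurableSet_Ioo fun _ hs =>
    ENNReal.div_le_div_right (lowerFlux_mono hu₀ hf_mono h₁₂ h₂ hs.1.le) _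

namespace IsMonotoneSupersolution

theorem deriv_nonneg (hu : IsMonotoneSupersolution l r a f u) {t : ℝ} (ht : t ∈ Ioo l r) :
    0 ≤ deriv u t := by
  rw [← derivWithin_of_isOpen isOpen_Ioo ht]
  exact (hu.monotoneOn.mono Ioo_subset_Ioc_self).derivWithin_nonneg

theorem continuousOn_deriv (hu : IsMonotoneSupersolution l r a f u)
    (ha : ∀ t ∈ Ioo l r, 0 < a t) (ha_cont : ContinuousOn a (Ioo l r)) :
    ContinuousOn (deriv u) (Ioo l r) :=
  (hu.differentiableOn_flux.continuousOn.div ha_cont fun t ht => (ha t ht).ne').congr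
    fun t ht => (mul_div_cancel_left₀ _ (ha t ht).ne').symm

theorem antitoneOn_flux (hu : IsMonotoneSupersolution l r a f u)
    (hf₀ : ∀ t ∈ Ioo l r, 0 ≤ f t (u t)) :
    AntitoneOn (fun t => a t * deriv u t) (Ioo l r) := by
  refine antitoneOn_of_deriv_nonpos (convex_Ioo l r) hu.differentiableOn_flux.continuousOn ?_ ?_ <;>
    rw [interior_Ioo]
  · exact hu.differentiableOn_flux
  · exact fun t ht => (hu.deriv_flux_le t ht).trans (neg_nonpos.2 (hf₀ t ht))

theorem lowerFlux_le (hu : IsMonotoneSupersolution l r a f u) (hu₀ : ∀ t ∈ Ioo l r, 0 ≤ u t)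
    (ha : ∀ t ∈ Ioo l r, 0 < a t) (hf₀ : ∀ t ∈ Ioo l r, 0 ≤ f t (u t))
    (hf_cont : ContinuousOn (fun t => f t (u t)) (Ioo l r)) {s : ℝ} (hs : s ∈ Ioo l r) :
    lowerFlux r f (fun t => ENNReal.ofReal (u t)) s ≤ ENNReal.ofReal (a s * deriv u s) := by
  have hsub : Ioo s r ⊆ Ioo l r := Ioo_subset_Ioo_left hs.1.le
  calc lowerFlux r f (fun t => ENNReal.ofReal (u t)) s
      = ∫⁻ τ in Ioo s r, ENNReal.ofReal (f τ (u τ)) :=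
        setLIntegral_congr_fun measurableSet_Ioo fun τ hτ => by
          simp only [ENNReal.toReal_ofReal (hu₀ τ (hsub hτ))]
    _ ≤ ENNReal.ofReal (a s * deriv u s) := by
        refine lintegral_Ioo_ofReal_le_of_le_deriv (G := fun t => -(a t * deriv u t))
          (hf_cont.mono hsub) (fun t ht => hf₀ t (hsub ht)) (hu.differentiableOn_flux.mono hsub).neg
          (fun t ht => ?_) fun x hx y hy => ?_
        · rw [deriv.fun_neg]
          exact le_neg_of_le_neg (hu.deriv_flux_le t (hsub ht))
        · have hxs := hu.antitoneOn_flux hf₀ hs (hsub hx) hx.1.le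
          have hy₀ := mul_nonneg (ha y (hsub hy)).le (hu.deriv_nonneg (hsub hy))
          linarith

theorem sturmLiouvilleMap_le (hu : IsMonotoneSupersolution l r a f u)
    (ha : ∀ t ∈ Ioo l r, 0 < a t) (ha_cont : ContinuousOn a (Ioo l r))
    (hf₀ : ∀ t ∈ Ioo l r, 0 ≤ f t (u t))
    (hf_cont : ContinuousOn (fun t => f t (u t)) (Ioo l r)) (hc : 0 ≤ c)
    (hcu : ∀ t ∈ Ioc l r, c ≤ u t) {t : ℝ} (ht : t ∈ Ioc l r) :
    sturmLiouvilleMap l r c a f (fun t => ENNReal.ofReal (u t)) t ≤ ENNReal.ofReal (u t) := by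
  have hsub : Ioo l t ⊆ Ioo l r := Ioo_subset_Ioo_right ht.2
  have hu₀ : ∀ t ∈ Ioo l r, 0 ≤ u t := fun t ht => hc.trans (hcu t (Ioo_subset_Ioc_self ht))
  have houter : ∫⁻ s in Ioo l t, lowerFlux r f (fun t => ENNReal.ofReal (u t)) s
      / ENNReal.ofReal (a s) ≤ ENNReal.ofReal (u t - c) :=
    calc _ ≤ ∫⁻ s in Ioo l t, ENNReal.ofReal (deriv u s) := by
          refine setLIntegral_mono' measurableSet_Ioo fun s hs => ?_
          have has := ha s (hsub hs)
          rw [← mul_div_cancel_left₀ (deriv u s) has.ne', ENNReal.ofReal_div_of_pos has]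
          exact ENNReal.div_le_div_right (hu.lowerFlux_le hu₀ ha hf₀ hf_cont (hsub hs)) _
      _ ≤ ENNReal.ofReal (u t - c) := by
          refine lintegral_Ioo_ofReal_le_of_le_deriv
            ((hu.continuousOn_deriv ha ha_cont).mono hsub)
            (fun s hs => hu.deriv_nonneg (hsub hs)) (hu.differentiableOn.mono hsub)
            (fun s _ => le_rfl) fun x hx y hy => ?_
          have hyt := hu.monotoneOn (Ioo_subset_Ioc_self (hsub hy)) ht hy.2.le
          have hcx := hcu x (Ioo_subset_Ioc_self (hsub hx))
          linarith
  calc sturmLiouvilleMap l r c a f (fun t => ENNReal.ofReal (u t)) t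
      ≤ ENNReal.ofReal c + ENNReal.ofReal (u t - c) := add_le_add le_rfl houter
    _ = ENNReal.ofReal (u t) := by
        rw [← ENNReal.ofReal_add hc (sub_nonneg.2 (hcu t ht)), add_sub_cancel]

theorem exists_fixedPoint (hu : IsMonotoneSupersolution l r a f u)
    (ha : ∀ t ∈ Ioo l r, 0 < a t) (ha_cont : ContinuousOn a (Ioo l r))
    (hf₀ : ∀ t ∈ Ioo l r, 0 ≤ f t (u t)) (hf_mono : ∀ t ∈ Ioo l r, MonotoneOn (f t) (Icc 0 (u t)))
    (hf_cont : ContinuousOn (fun t => f t (u t)) (Ioo l r)) (hc : 0 ≤ c)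
    (hcu : ∀ t ∈ Ioc l r, c ≤ u t) :
    ∃ ω : ℝ → ℝ≥0∞, (∀ t ∈ Ioc l r, ω t ≤ ENNReal.ofReal (u t)) ∧
      sturmLiouvilleMap l r c a f ω = ω := by
  classical
  let Ω : ℝ → ℝ≥0∞ := fun t => if t ∈ Ioc l r then ENNReal.ofReal (u t) else ⊤
  have hΩ : ∀ t ∈ Ioc l r, Ω t = ENNReal.ofReal (u t) := fun t ht => if_pos ht
  have hu₀ : ∀ t ∈ Ioo l r, 0 ≤ u t := fun t ht => hc.trans (hcu t (Ioo_subset_Ioc_self ht))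
  have hΩ_le : ∀ t ∈ Ioo l r, Ω t ≤ ENNReal.ofReal (u t) := fun t ht =>
    (hΩ t (Ioo_subset_Ioc_self ht)).le
  have hmono : MonotoneOn (sturmLiouvilleMap l r c a f) (Iic Ω) := fun ω₁ _ ω₂ h₂ h₁₂ =>
    sturmLiouvilleMap_mono hu₀ hf_mono (fun t _ => h₁₂ t) fun t ht => (h₂ t).trans (hΩ_le t ht)
  have hmap : sturmLiouvilleMap l r c a f Ω ≤ Ω := fun t => by
    by_cases ht : t ∈ Ioc l r
    · rw [hΩ t ht]
      exact (sturmLiouvilleMap_mono hu₀ hf_mono hΩ_le (fun _ _ => le_rfl) t).trans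
        (hu.sturmLiouvilleMap_le ha ha_cont hf₀ hf_cont hc hcu ht)
    · simp only [Ω, if_neg ht, le_top]
  obtain ⟨ω, hωΩ, hω⟩ := exists_fixedPoint_le_of_monotoneOn_Iic hmono hmap
  exact ⟨ω, fun t ht => (hωΩ t).trans_eq (hΩ t ht), hω⟩

end IsMonotoneSupersolution

theorem hasDerivAt_toReal_lowerFlux {ω : ℝ → ℝ≥0∞}
    (hf_cont : ContinuousOn (fun t => f t (ω t).toReal) (Ioo l r))
    (hf₀ : ∀ t ∈ Ioo l r, 0 ≤ f t (ω t).toReal)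
    (hfin : ∀ t ∈ Ioo l r, lowerFlux r f ω t ≠ ∞) {t : ℝ} (ht : t ∈ Ioo l r) :
    HasDerivAt (fun s => (lowerFlux r f ω s).toReal) (-f t (ω t).toReal) t := by
  have hsub : ∀ {s}, s ∈ Ioo l r → Ioo s r ⊆ Ioo l r := fun hs => Ioo_subset_Ioo_left hs.1.le
  have hmeas : ∀ {s}, s ∈ Ioo l r →
      AEStronglyMeasurable (fun t => f t (ω t).toReal) (volume.restrict (Ioo s r)) := fun hs =>
    (hf_cont.mono (hsub hs)).aestronglyMeasurable measurableSet_Ioo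
  have hint : IntervalIntegrable (fun t => f t (ω t).toReal) volume t r :=
    intervalIntegrable_of_lintegral_Ioo_ne_top ht.2.le (hmeas ht)
      (fun s hs => hf₀ s (hsub ht hs)) (hfin t ht)
  have htn : Ioo l r ∈ 𝓝 t := isOpen_Ioo.mem_nhds ht
  refine (intervalIntegral.integral_hasDerivAt_left hint
    (hf_cont.stronglyMeasurableAtFilter isOpen_Ioo t ht)
    (hf_cont.continuousAt htn)).congr_of_eventuallyEq ?_
  filter_upwards [htn] with s hs
  exact toReal_lintegral_Ioo_ofReal hs.2.le (hmeas hs) fun τ hτ => hf₀ τ (hsub hs hτ)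

section ToReal

variable {ω : ℝ → ℝ≥0∞} {t : ℝ}

theorem aestronglyMeasurable_toReal_lowerFlux_div (ha_cont : ContinuousOn a (Ioo l r))
    (ht : t ∈ Ioc l r) :
    AEStronglyMeasurable (fun s => (lowerFlux r f ω s).toReal / a s)
      (volume.restrict (Ioo l t)) := by
  refine ((lowerFlux_antitone ω).measurable.ennreal_toReal.aemeasurable.div ?_).aestronglyMeasurable
  exact (ha_cont.mono (Ioo_subset_Ioo_right ht.2)).aemeasurable measurableSet_Ioo

theorem sturmLiouvilleMap_eq_lintegral_ofReal (ha : ∀ t ∈ Ioo l r, 0 < a t)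
    (hfin : ∀ s ∈ Ioo l r, lowerFlux r f ω s ≠ ∞) (ht : t ∈ Ioc l r) :
    sturmLiouvilleMap l r c a f ω t =
      ENNReal.ofReal c + ∫⁻ s in Ioo l t, ENNReal.ofReal ((lowerFlux r f ω s).toReal / a s) := by
  refine congrArg _ (setLIntegral_congr_fun measurableSet_Ioo fun s hs => ?_)
  replace hs : s ∈ Ioo l r := Ioo_subset_Ioo_right ht.2 hs
  simp only [ENNReal.ofReal_div_of_pos (ha s hs), ENNReal.ofReal_toReal (hfin s hs)]

theorem intervalIntegrable_of_sturmLiouvilleMap_eq (hω : sturmLiouvilleMap l r c a f ω = ω)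
    (ha : ∀ t ∈ Ioo l r, 0 < a t) (ha_cont : ContinuousOn a (Ioo l r))
    (hflux : ∀ s ∈ Ioo l r, lowerFlux r f ω s ≠ ∞) (ht : t ∈ Ioc l r) (hfin : ω t ≠ ∞) :
    IntervalIntegrable (fun s => (lowerFlux r f ω s).toReal / a s) volume l t := by
  refine intervalIntegrable_of_lintegral_Ioo_ne_top ht.1.le
    (aestronglyMeasurable_toReal_lowerFlux_div ha_cont ht)
    (fun s hs => div_nonneg ENNReal.toReal_nonneg (ha s (Ioo_subset_Ioo_right ht.2 hs)).le) ?_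
  have heq := sturmLiouvilleMap_eq_lintegral_ofReal (c := c) ha hflux ht
  rw [hω] at heq
  exact (ENNReal.add_ne_top.1 (heq ▸ hfin)).2

theorem toReal_eq_add_integral_of_sturmLiouvilleMap_eq (hω : sturmLiouvilleMap l r c a f ω = ω)
    (ha : ∀ t ∈ Ioo l r, 0 < a t) (ha_cont : ContinuousOn a (Ioo l r))
    (hflux : ∀ s ∈ Ioo l r, lowerFlux r f ω s ≠ ∞) (hc : 0 ≤ c) (ht : t ∈ Ioc l r)
    (hfin : ω t ≠ ∞) :
    (ω t).toReal = c + ∫ s in l..t, (lowerFlux r f ω s).toReal / a s := by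
  have heq := sturmLiouvilleMap_eq_lintegral_ofReal (c := c) ha hflux ht
  rw [hω] at heq
  rw [heq, ENNReal.toReal_add ENNReal.ofReal_ne_top (ENNReal.add_ne_top.1 (heq ▸ hfin)).2,
    ENNReal.toReal_ofReal hc, toReal_lintegral_Ioo_ofReal ht.1.le
      (aestronglyMeasurable_toReal_lowerFlux_div ha_cont ht)
      fun s hs => div_nonneg ENNReal.toReal_nonneg (ha s (Ioo_subset_Ioo_right ht.2 hs)).le]

theorem le_toReal_of_sturmLiouvilleMap_eq (hω : sturmLiouvilleMap l r c a f ω = ω)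
    (hfint : ω t ≠ ∞) : c ≤ (ω t).toReal :=
  (ENNReal.ofReal_le_iff_le_toReal hfint).1 (le_self_add.trans_eq (congrFun hω t))

theorem continuousAt_toReal_of_sturmLiouvilleMap_eq (hω : sturmLiouvilleMap l r c a f ω = ω)
    (ha : ∀ t ∈ Ioo l r, 0 < a t) (ha_cont : ContinuousOn a (Ioo l r))
    (hflux : ∀ s ∈ Ioo l r, lowerFlux r f ω s ≠ ∞) (hfin : ∀ t ∈ Ioc l r, ω t ≠ ∞) (hc : 0 ≤ c)
    (ht : t ∈ Ioo l r) : ContinuousAt (fun t => (ω t).toReal) t := by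
  have hr : r ∈ Ioc l r := ⟨ht.1.trans ht.2, le_rfl⟩
  have hprim : ContinuousOn (fun t => ∫ s in l..t, (lowerFlux r f ω s).toReal / a s) (Icc l r) := by
    rw [← uIcc_of_le hr.1.le]
    exact intervalIntegral.continuousOn_primitive_interval'
      (intervalIntegrable_of_sturmLiouvilleMap_eq hω ha ha_cont hflux hr (hfin r hr)) left_mem_uIcc
  refine ((hprim.continuousAt (Icc_mem_nhds ht.1 ht.2)).const_add c).congr ?_
  filter_upwards [isOpen_Ioo.mem_nhds ht] with s hs
  have hsc := Ioo_subset_Ioc_self hs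
  rw [toReal_eq_add_integral_of_sturmLiouvilleMap_eq hω ha ha_cont hflux hc hsc (hfin s hsc)]

theorem hasDerivAt_toReal_of_sturmLiouvilleMap_eq (hω : sturmLiouvilleMap l r c a f ω = ω)
    (ha : ∀ t ∈ Ioo l r, 0 < a t) (ha_cont : ContinuousOn a (Ioo l r))
    (hflux : ∀ s ∈ Ioo l r, lowerFlux r f ω s ≠ ∞)
    (hflux_cont : ContinuousOn (fun s => (lowerFlux r f ω s).toReal) (Ioo l r))
    (hfin : ∀ t ∈ Ioc l r, ω t ≠ ∞) (hc : 0 ≤ c) (ht : t ∈ Ioo l r) :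
    HasDerivAt (fun t => (ω t).toReal) ((lowerFlux r f ω t).toReal / a t) t := by
  have htc := Ioo_subset_Ioc_self ht
  have hcont : ContinuousOn (fun s => (lowerFlux r f ω s).toReal / a s) (Ioo l r) :=
    hflux_cont.div ha_cont fun s hs => (ha s hs).ne'
  refine ((intervalIntegral.integral_hasDerivAt_right
    (intervalIntegrable_of_sturmLiouvilleMap_eq hω ha ha_cont hflux htc (hfin t htc))
    (hcont.stronglyMeasurableAtFilter isOpen_Ioo t ht)
    (hcont.continuousAt (isOpen_Ioo.mem_nhds ht))).const_add c).congr_of_eventuallyEq ?_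
  filter_upwards [isOpen_Ioo.mem_nhds ht] with s hs
  have hsc := Ioo_subset_Ioc_self hs
  rw [toReal_eq_add_integral_of_sturmLiouvilleMap_eq hω ha ha_cont hflux hc hsc (hfin s hsc)]

end ToReal

theorem IsMonotoneSupersolution.exists_solution (hu : IsMonotoneSupersolution l r a f u)
    (ha : ∀ t ∈ Ioo l r, 0 < a t) (ha_cont : ContinuousOn a (Ioo l r))
    (hf_zero : ∀ t ∈ Ioo l r, 0 ≤ f t 0)
    (hf_mono : ∀ t ∈ Ioo l r, MonotoneOn (f t) (Icc 0 (u t)))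
    (hf_cont : ContinuousOn (Function.uncurry f) (Ioo l r ×ˢ Ici 0)) (hc : 0 ≤ c)
    (hcu : ∀ t ∈ Ioc l r, c ≤ u t) :
    ∃ w : ℝ → ℝ, (∀ t ∈ Ioc l r, w t ∈ Icc c (u t)) ∧ ∀ t ∈ Ioo l r,
      DifferentiableAt ℝ w t ∧ HasDerivAt (fun s => a s * deriv w s) (-f t (w t)) t := by
  have hu₀ : ∀ t ∈ Ioo l r, 0 ≤ u t := fun t ht => hc.trans (hcu t (Ioo_subset_Ioc_self ht))
  have hf₀ : ∀ t ∈ Ioo l r, ∀ x ∈ Icc 0 (u t), 0 ≤ f t x := fun t ht x hx =>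
    (hf_zero t ht).trans (hf_mono t ht (left_mem_Icc.2 (hu₀ t ht)) hx hx.1)
  have hf₀u : ∀ t ∈ Ioo l r, 0 ≤ f t (u t) := fun t ht =>
    hf₀ t ht _ (right_mem_Icc.2 (hu₀ t ht))
  have hf_comp : ∀ {y : ℝ → ℝ}, ContinuousOn y (Ioo l r) → (∀ t ∈ Ioo l r, 0 ≤ y t) →
      ContinuousOn (fun t => f t (y t)) (Ioo l r) := fun hy hy₀ =>
    hf_cont.comp (continuousOn_id.prodMk hy) fun t ht => ⟨ht, hy₀ t ht⟩
  have hfu_cont := hf_comp hu.differentiableOn.continuousOn hu₀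
  obtain ⟨ω, hωu, hω⟩ := hu.exists_fixedPoint ha ha_cont hf₀u hf_mono hfu_cont hc hcu
  have hfin : ∀ t ∈ Ioc l r, ω t ≠ ∞ := fun t ht =>
    ne_top_of_le_ne_top ENNReal.ofReal_ne_top (hωu t ht)
  have hflux : ∀ s ∈ Ioo l r, lowerFlux r f ω s ≠ ∞ := fun s hs =>
    ne_top_of_le_ne_top ENNReal.ofReal_ne_top <|
      (lowerFlux_mono hu₀ hf_mono (fun t ht => hωu t (Ioo_subset_Ioc_self ht)) (fun _ _ => le_rfl)
        hs.1.le).trans (hu.lowerFlux_le hu₀ ha hf₀u hfu_cont hs)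
  have hmem : ∀ t ∈ Ioc l r, (ω t).toReal ∈ Icc c (u t) := fun t ht =>
    ⟨le_toReal_of_sturmLiouvilleMap_eq hω (hfin t ht),
      ENNReal.toReal_le_of_le_ofReal (hc.trans (hcu t ht)) (hωu t ht)⟩
  have hflux' : ∀ t ∈ Ioo l r,
      HasDerivAt (fun s => (lowerFlux r f ω s).toReal) (-f t (ω t).toReal) t := fun t ht =>
    hasDerivAt_toReal_lowerFlux (hf_comp (fun s hs => (continuousAt_toReal_of_sturmLiouvilleMap_eq
      hω ha ha_cont hflux hfin hc hs).continuousWithinAt) fun _ _ => ENNReal.toReal_nonneg)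
      (fun s hs => hf₀ s hs _ ⟨ENNReal.toReal_nonneg, (hmem s (Ioo_subset_Ioc_self hs)).2⟩) hflux ht
  have hω' : ∀ t ∈ Ioo l r,
      HasDerivAt (fun t => (ω t).toReal) ((lowerFlux r f ω t).toReal / a t) t := fun t ht =>
    hasDerivAt_toReal_of_sturmLiouvilleMap_eq hω ha ha_cont hflux
      (fun s hs => (hflux' s hs).continuousAt.continuousWithinAt) hfin hc ht
  refine ⟨fun t => (ω t).toReal, hmem, fun t ht => ⟨(hω' t ht).differentiableAt,
    (hflux' t ht).congr_of_eventuallyEq ?_⟩⟩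
  filter_upwards [isOpen_Ioo.mem_nhds ht] with s hs
  rw [(hω' s hs).deriv, mul_div_cancel₀ _ (ha s hs).ne']

end SturmLiouville

theorem contDiffOn_two_iff_of_isOpen {S : Set ℝ} (hS : IsOpen S) {u : ℝ → ℝ} :
    ContDiffOn ℝ 2 u S ↔
      DifferentiableOn ℝ u S ∧ DifferentiableOn ℝ (deriv u) S ∧
        ContinuousOn (deriv (deriv u)) S := by
  rw [show (2 : WithTop ℕ∞) = 1 + 1 from one_add_one_eq_two.symm,
    contDiffOn_succ_iff_deriv_of_isOpen hS,
    show (1 : WithTop ℕ∞) = 0 + 1 from (zero_add 1).symm, contDiffOn_succ_iff_deriv_of_isOpen hS]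
  simp

section AngularOperator

variable {m p c : ℝ} {V h z w : ℝ → ℝ}

/-- The angular part of the Laplacian in dimension `m + 1` with a potential `V`, acting on functions
of `t = x₁ / |x|`. -/
noncomputable def angularOp (m : ℝ) (V u : ℝ → ℝ) (t : ℝ) : ℝ :=
  (1 - t ^ 2) * deriv (deriv u) t - m * t * deriv u t + V t * u t

/-- The integrating factor of `angularOp m V`: multiplying by `angularWeight (m - 2)` puts the
operator in the divergence form `(angularWeight m · u')' + angularWeight (m - 2) · V · u`. -/
noncomputable def angularWeight (m t : ℝ) : ℝ := (1 - t ^ 2) ^ (m / 2)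

/-- The right-hand side `f` for which `h w` solves `angularOp m V v = v ^ p` as soon as `w` solves
`(angularWeight m · h² · w')' = -f(t, w)`. -/
noncomputable def angularSource (m p : ℝ) (V h : ℝ → ℝ) (t x : ℝ) : ℝ :=
  angularWeight (m - 2) t * h t * (x * angularOp m V h t - (h t * x) ^ p)

theorem one_sub_sq_pos {t : ℝ} (ht : t ∈ Ioo (0 : ℝ) 1) : 0 < 1 - t ^ 2 :=
  sub_pos.2 (pow_lt_one₀ ht.1.le ht.2 two_ne_zero)

theorem angularWeight_pos (m : ℝ) {t : ℝ} (ht : t ∈ Ioo (0 : ℝ) 1) : 0 < angularWeight m t :=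
  rpow_pos_of_pos (one_sub_sq_pos ht) _

theorem one_sub_sq_mul_angularWeight_sub_two (m : ℝ) {t : ℝ} (ht : t ∈ Ioo (0 : ℝ) 1) :
    (1 - t ^ 2) * angularWeight (m - 2) t = angularWeight m t := by
  rw [angularWeight, angularWeight, sub_div, div_self two_ne_zero,
    rpow_sub_one (one_sub_sq_pos ht).ne', mul_div_cancel₀ _ (one_sub_sq_pos ht).ne']

theorem hasDerivAt_angularWeight (m : ℝ) {t : ℝ} (ht : t ∈ Ioo (0 : ℝ) 1) :
    HasDerivAt (angularWeight m) (-(m * t * angularWeight (m - 2) t)) t := by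
  refine (((hasDerivAt_pow 2 t).const_sub 1).rpow_const (p := m / 2)
    (Or.inl (one_sub_sq_pos ht).ne')).congr_deriv ?_
  rw [angularWeight, sub_div, div_self two_ne_zero]
  push_cast
  ring

theorem continuousOn_angularWeight (m : ℝ) : ContinuousOn (angularWeight m) (Ioo 0 1) :=
  fun _ ht => (hasDerivAt_angularWeight m ht).continuousAt.continuousWithinAt

theorem continuousOn_angularOp (hV : ContinuousOn V (Ioo 0 1)) (hh : ContDiffOn ℝ 2 h (Ioo 0 1)) :
    ContinuousOn (angularOp m V h) (Ioo 0 1) := by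
  obtain ⟨hh₁, hh₂, hh₃⟩ := (contDiffOn_two_iff_of_isOpen isOpen_Ioo).1 hh
  exact ((ContinuousOn.mul (by fun_prop) hh₃).sub
    (ContinuousOn.mul (by fun_prop) hh₂.continuousOn)).add (hV.mul hh₁.continuousOn)

theorem hasDerivAt_angularWeight_mul_wronskian (hh : ContDiffOn ℝ 2 h (Ioo 0 1))
    (hz : DifferentiableOn ℝ z (Ioo 0 1)) (hz' : DifferentiableOn ℝ (deriv z) (Ioo 0 1))
    {t : ℝ} (ht : t ∈ Ioo (0 : ℝ) 1) :
    HasDerivAt (fun s => angularWeight m s * (h s * deriv z s - deriv h s * z s))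
      (angularWeight (m - 2) t * (h t * angularOp m V z t - z t * angularOp m V h t)) t := by
  obtain ⟨hh₁, hh₂, -⟩ := (contDiffOn_two_iff_of_isOpen isOpen_Ioo).1 hh
  have hasDerivAt_of {y : ℝ → ℝ} (hy : DifferentiableOn ℝ y (Ioo 0 1)) :=
    (hy.differentiableAt (isOpen_Ioo.mem_nhds ht)).hasDerivAt
  refine ((hasDerivAt_angularWeight m ht).mul (((hasDerivAt_of hh₁).mul (hasDerivAt_of hz')).sub
    ((hasDerivAt_of hh₂).mul (hasDerivAt_of hz)))).congr_deriv ?_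
  simp only [Pi.mul_apply, Pi.sub_apply, angularOp, ← one_sub_sq_mul_angularWeight_sub_two m ht]
  ring

theorem sq_mul_deriv_div {t : ℝ} (hh : DifferentiableAt ℝ h t) (hz : DifferentiableAt ℝ z t)
    (ht : h t ≠ 0) :
    h t ^ 2 * deriv (fun s => z s / h s) t = h t * deriv z t - deriv h t * z t := by
  rw [deriv_fun_div hz hh ht]
  field_simp

theorem hasDerivAt_angularWeight_mul_sq_mul_deriv_div (hh : ContDiffOn ℝ 2 h (Ioo 0 1))
    (hz : DifferentiableOn ℝ z (Ioo 0 1)) (hz' : DifferentiableOn ℝ (deriv z) (Ioo 0 1))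
    (hh₀ : ∀ t ∈ Ioo 0 1, h t ≠ 0) {t : ℝ} (ht : t ∈ Ioo (0 : ℝ) 1) :
    HasDerivAt (fun s => angularWeight m s * h s ^ 2 * deriv (fun s => z s / h s) s)
      (angularWeight (m - 2) t * (h t * angularOp m V z t - z t * angularOp m V h t)) t := by
  refine (hasDerivAt_angularWeight_mul_wronskian hh hz hz' ht).congr_of_eventuallyEq ?_
  filter_upwards [isOpen_Ioo.mem_nhds ht] with s hs
  have hsn := isOpen_Ioo.mem_nhds hs
  rw [mul_assoc, sq_mul_deriv_div ((hh.differentiableOn two_ne_zero).differentiableAt hsn)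
    (hz.differentiableAt hsn) (hh₀ s hs)]

theorem monotoneOn_angularSource (hp : 1 < p) {t : ℝ} (ht : t ∈ Ioo (0 : ℝ) 1) (hh₀ : 0 < h t)
    (hh : p * z t ^ (p - 1) * h t ≤ angularOp m V h t) :
    MonotoneOn (angularSource m p V h t) (Icc 0 (z t / h t)) := by
  have hderiv (x : ℝ) : HasDerivAt (fun x => x * angularOp m V h t - (h t * x) ^ p)
      (angularOp m V h t - p * (h t * x) ^ (p - 1) * h t) x :=
    (((hasDerivAt_id x).mul_const _).sub
      (((hasDerivAt_id x).const_mul (h t)).rpow_const (Or.inr hp.le))).congr_deriv (by simp; ring)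
  suffices MonotoneOn (fun x => x * angularOp m V h t - (h t * x) ^ p) (Icc 0 (z t / h t)) from
    fun x hx y hy hxy => mul_le_mul_of_nonneg_left (this hx hy hxy)
      (mul_pos (angularWeight_pos _ ht) hh₀).le
  refine monotoneOn_of_deriv_nonneg (convex_Icc _ _)
    (fun x _ => (hderiv x).continuousAt.continuousWithinAt)
    (fun x _ => (hderiv x).differentiableAt.differentiableWithinAt) fun x hx => ?_
  rw [interior_Icc] at hx
  have hxz : h t * x ≤ z t := by
    rw [mul_comm, ← le_div_iff₀ hh₀]
    exact hx.2.le
  have hpow : (h t * x) ^ (p - 1) ≤ z t ^ (p - 1) :=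
    rpow_le_rpow (mul_pos hh₀ hx.1).le hxz (sub_nonneg.2 hp.le)
  rw [(hderiv x).deriv, sub_nonneg]
  exact le_trans (by gcongr) hh

theorem continuousOn_uncurry_angularSource (hp : 1 < p) (hV : ContinuousOn V (Ioo 0 1))
    (hh : ContDiffOn ℝ 2 h (Ioo 0 1)) :
    ContinuousOn (Function.uncurry (angularSource m p V h)) (Ioo 0 1 ×ˢ Ici 0) := by
  have comp_fst {y : ℝ → ℝ} (hy : ContinuousOn y (Ioo 0 1)) :
      ContinuousOn (fun x : ℝ × ℝ => y x.1) (Ioo (0 : ℝ) 1 ×ˢ Ici 0) :=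
    hy.comp continuousOn_fst fun x hx => hx.1
  have hh₁ := comp_fst hh.continuousOn
  exact ((comp_fst (continuousOn_angularWeight _)).mul hh₁).mul
    ((continuousOn_snd.mul (comp_fst (continuousOn_angularOp hV hh))).sub
      ((hh₁.mul continuousOn_snd).rpow_const fun x _ => Or.inr (zero_le_one.trans hp.le)))

theorem isMonotoneSupersolution_div (hh : ContDiffOn ℝ 2 h (Ioo 0 1))
    (hh₀ : ∀ t ∈ Ioo 0 1, 0 < h t) (hz : ContDiffOn ℝ 2 z (Ioo 0 1))
    (hzp : ∀ t ∈ Ioo 0 1, angularOp m V z t ≤ z t ^ p)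
    (hmono : MonotoneOn (fun t => z t / h t) (Ioc 0 1)) :
    IsMonotoneSupersolution 0 1 (fun t => angularWeight m t * h t ^ 2) (angularSource m p V h)
      (fun t => z t / h t) := by
  obtain ⟨hz₁, hz₂, -⟩ := (contDiffOn_two_iff_of_isOpen isOpen_Ioo).1 hz
  have hflux {t : ℝ} (ht : t ∈ Ioo (0 : ℝ) 1) := hasDerivAt_angularWeight_mul_sq_mul_deriv_div
    (m := m) (V := V) hh hz₁ hz₂ (fun t ht => (hh₀ t ht).ne') ht
  refine ⟨hmono, hz₁.div (hh.differentiableOn two_ne_zero) fun t ht => (hh₀ t ht).ne',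
    fun t ht => (hflux ht).differentiableAt.differentiableWithinAt, fun t ht => ?_⟩
  rw [(hflux ht).deriv]
  calc angularWeight (m - 2) t * (h t * angularOp m V z t - z t * angularOp m V h t)
      ≤ angularWeight (m - 2) t * (h t * z t ^ p - z t * angularOp m V h t) := by
        have := (angularWeight_pos (m - 2) ht).le
        have := (hh₀ t ht).le
        gcongr
        exact hzp t ht
    _ = -angularSource m p V h t (z t / h t) := by
        rw [angularSource, mul_div_cancel₀ _ (hh₀ t ht).ne']
        field_simp [(hh₀ t ht).ne']
        ring

theorem differentiableOn_deriv_mul_of_flux {a : ℝ → ℝ} {S : Set ℝ} (hS : IsOpen S)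
    (hh : ContDiffOn ℝ 2 h S) (ha : DifferentiableOn ℝ a S) (ha₀ : ∀ t ∈ S, a t ≠ 0)
    (hw : DifferentiableOn ℝ w S) (hflux : DifferentiableOn ℝ (fun s => a s * deriv w s) S) :
    DifferentiableOn ℝ (deriv fun s => h s * w s) S := by
  obtain ⟨hh₁, hh₂, -⟩ := (contDiffOn_two_iff_of_isOpen hS).1 hh
  have hw' : DifferentiableOn ℝ (deriv w) S := (hflux.div ha ha₀).congr fun t ht =>
    (mul_div_cancel_left₀ _ (ha₀ t ht)).symm
  refine ((hh₂.mul hw).add (hh₁.mul hw')).congr fun t ht => ?_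
  have htn := hS.mem_nhds ht
  exact deriv_fun_mul (hh₁.differentiableAt htn) (hw.differentiableAt htn)

theorem angularOp_mul_eq_rpow (hh : ContDiffOn ℝ 2 h (Ioo 0 1)) (hh₀ : ∀ t ∈ Ioo 0 1, 0 < h t)
    (hw : DifferentiableOn ℝ w (Ioo 0 1))
    (hv : DifferentiableOn ℝ (deriv fun s => h s * w s) (Ioo 0 1)) {t : ℝ} (ht : t ∈ Ioo (0 : ℝ) 1)
    (hflux : HasDerivAt (fun s => angularWeight m s * h s ^ 2 * deriv w s)
      (-angularSource m p V h t (w t)) t) :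
    angularOp m V (fun s => h s * w s) t = (h t * w t) ^ p := by
  have hlagrange : HasDerivAt (fun s => angularWeight m s * h s ^ 2 * deriv w s)
      (angularWeight (m - 2) t * (h t * angularOp m V (fun s => h s * w s) t
        - h t * w t * angularOp m V h t)) t := by
    refine (hasDerivAt_angularWeight_mul_sq_mul_deriv_div (V := V) hh
      ((hh.differentiableOn two_ne_zero).mul hw) hv (fun t ht => (hh₀ t ht).ne')
      ht).congr_of_eventuallyEq ?_
    filter_upwards [isOpen_Ioo.mem_nhds ht] with s hs
    congr 1
    refine Filter.EventuallyEq.deriv_eq ?_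
    filter_upwards [isOpen_Ioo.mem_nhds hs] with τ hτ
    exact (mul_div_cancel_left₀ _ (hh₀ τ hτ).ne').symm
  have heq := hflux.unique hlagrange
  have hρh : angularWeight (m - 2) t * h t ≠ 0 :=
    (mul_pos (angularWeight_pos _ ht) (hh₀ t ht)).ne'
  refine mul_left_cancel₀ hρh ?_
  rw [angularSource] at heq
  linear_combination -heq

theorem contDiffOn_of_angularOp_eq_rpow {v : ℝ → ℝ} (hp : 0 ≤ p) (hV : ContinuousOn V (Ioo 0 1))
    (hv : DifferentiableOn ℝ v (Ioo 0 1)) (hv' : DifferentiableOn ℝ (deriv v) (Ioo 0 1))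
    (heq : ∀ t ∈ Ioo 0 1, angularOp m V v t = v t ^ p) : ContDiffOn ℝ 2 v (Ioo 0 1) := by
  refine (contDiffOn_two_iff_of_isOpen isOpen_Ioo).2 ⟨hv, hv', ?_⟩
  have hcont : ContinuousOn (fun t => (v t ^ p + m * t * deriv v t - V t * v t) / (1 - t ^ 2))
      (Ioo 0 1) :=
    (((hv.continuousOn.rpow_const fun _ _ => Or.inr hp).add
      (ContinuousOn.mul (by fun_prop) hv'.continuousOn)).sub (hV.mul hv.continuousOn)).div
      (by fun_prop) fun t ht => (one_sub_sq_pos ht).ne'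
  refine hcont.congr fun t ht => ?_
  rw [eq_div_iff (one_sub_sq_pos ht).ne', ← heq t ht, angularOp]
  ring

theorem exists_angularOp_eq_rpow (hp : 1 < p) (hc : 0 ≤ c) (hV : ContinuousOn V (Ioo 0 1))
    (hh : ContDiffOn ℝ 2 h (Ioo 0 1)) (hh₀ : ∀ t ∈ Ioc 0 1, 0 < h t)
    (hz : ContDiffOn ℝ 2 z (Ioo 0 1)) (hzp : ∀ t ∈ Ioo 0 1, angularOp m V z t ≤ z t ^ p)
    (hhz : ∀ t ∈ Ioo 0 1, p * z t ^ (p - 1) * h t ≤ angularOp m V h t)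
    (hmono : MonotoneOn (fun t => z t / h t) (Ioc 0 1)) (hcz : ∀ t ∈ Ioc 0 1, c * h t ≤ z t) :
    ∃ v : ℝ → ℝ, ContDiffOn ℝ 2 v (Ioo 0 1) ∧ (∀ t ∈ Ioc 0 1, v t ∈ Icc (c * h t) (z t)) ∧
      ∀ t ∈ Ioo 0 1, angularOp m V v t = v t ^ p := by
  have hh₀' : ∀ t ∈ Ioo 0 1, 0 < h t := fun t ht => hh₀ t (Ioo_subset_Ioc_self ht)
  have hh₁ := hh.differentiableOn two_ne_zero
  have ha₀ : ∀ t ∈ Ioo 0 1, 0 < angularWeight m t * h t ^ 2 := fun t ht =>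
    mul_pos (angularWeight_pos m ht) (pow_pos (hh₀' t ht) 2)
  have ha : DifferentiableOn ℝ (fun t => angularWeight m t * h t ^ 2) (Ioo 0 1) :=
    DifferentiableOn.mul
      (fun t ht => (hasDerivAt_angularWeight m ht).differentiableAt.differentiableWithinAt)
      (hh₁.pow 2)
  obtain ⟨w, hw_mem, hw⟩ :=
    (isMonotoneSupersolution_div hh hh₀' hz hzp hmono).exists_solution ha₀ ha.continuousOn
      (fun t _ => by simp [angularSource, zero_rpow (zero_lt_one.trans hp).ne'])
      (fun t ht => monotoneOn_angularSource hp ht (hh₀' t ht) (hhz t ht))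
      (continuousOn_uncurry_angularSource hp hV hh) hc
      fun t ht => (le_div_iff₀ (hh₀ t ht)).2 (hcz t ht)
  have hw₁ : DifferentiableOn ℝ w (Ioo 0 1) := fun t ht => (hw t ht).1.differentiableWithinAt
  have hv₂ : DifferentiableOn ℝ (deriv fun t => h t * w t) (Ioo 0 1) :=
    differentiableOn_deriv_mul_of_flux isOpen_Ioo hh ha (fun t ht => (ha₀ t ht).ne') hw₁
      fun t ht => (hw t ht).2.differentiableAt.differentiableWithinAt
  have heq : ∀ t ∈ Ioo 0 1, angularOp m V (fun t => h t * w t) t = (h t * w t) ^ p := fun t ht =>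
    angularOp_mul_eq_rpow hh hh₀' hw₁ hv₂ ht (hw t ht).2
  refine ⟨fun t => h t * w t, contDiffOn_of_angularOp_eq_rpow (zero_le_one.trans hp.le) hV
    (hh₁.mul hw₁) hv₂ heq, fun t ht => ⟨?_, ?_⟩, heq⟩
  · rw [mul_comm c]
    exact mul_le_mul_of_nonneg_left (hw_mem t ht).1 (hh₀ t ht).le
  · exact (le_div_iff₀' (hh₀ t ht)).1 (hw_mem t ht).2

end AngularOperator

theorem exists_pos_forall_le_add_mul_rpow {g : ℝ → ℝ} (hg₀ : ∀ t ∈ Ioo 0 1, 0 ≤ g t)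
    (hg : Tendsto g (𝓝[>] 0) atTop) (D β : ℝ) :
    ∃ N > 0, ∀ t ∈ Ioo 0 1, D ≤ g t + N * t ^ β := by
  obtain ⟨ε, hε, hDg⟩ := mem_nhdsGT_iff_exists_Ioo_subset.1 (hg.eventually_ge_atTop D)
  have hεβ : 0 < min 1 (ε ^ β) := lt_min one_pos (rpow_pos_of_pos hε β)
  have hN : 0 < (|D| + 1) / min 1 (ε ^ β) := by positivity
  refine ⟨_, hN, fun t ht => ?_⟩
  have htβ : 0 < t ^ β := rpow_pos_of_pos ht.1 β
  rcases lt_or_ge t ε with htε | hεt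
  · exact (hDg ⟨ht.1, htε⟩).trans (le_add_of_nonneg_right (mul_pos hN htβ).le)
  · have hmin : min 1 (ε ^ β) ≤ t ^ β := by
      rcases le_total β 0 with hβ | hβ
      · exact (min_le_left _ _).trans (one_le_rpow_of_pos_of_le_one_of_nonpos ht.1 ht.2.le hβ)
      · exact (min_le_right _ _).trans (rpow_le_rpow hε.le hεt hβ)
    calc D ≤ |D| + 1 := (le_abs_self D).trans (lt_add_one _).le
      _ = (|D| + 1) / min 1 (ε ^ β) * min 1 (ε ^ β) := (div_mul_cancel₀ _ hεβ.ne').symm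
      _ ≤ (|D| + 1) / min 1 (ε ^ β) * t ^ β := mul_le_mul_of_nonneg_left hmin hN.le
      _ ≤ _ := le_add_of_nonneg_left (hg₀ t ht)

section Barrier

variable {α s K K' t m μ lam : ℝ}

/-- The Hardy potential of the angular equation, shifted by the constant `lam`. -/
noncomputable def hardyPotential (μ lam t : ℝ) : ℝ := μ / t ^ 2 + lam

/-- The perturbation `t ^ α * exp (-K t ^ s)` of the power `t ^ α`. If `α` is the smaller root of
`α ^ 2 - α + μ = 0`, then for small `s > 0` the perturbation adds a term of the sign of `K` and of
order `t ^ (s - 2)` to `angularOp`, which dominates every bounded term near `t = 0`. -/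
noncomputable def barrier (α s K t : ℝ) : ℝ := t ^ α * exp (-(K * t ^ s))

theorem barrier_pos (ht : 0 < t) : 0 < barrier α s K t :=
  mul_pos (rpow_pos_of_pos ht α) (exp_pos _)

theorem barrier_div_barrier (ht : 0 < t) :
    barrier α s K t / barrier α s K' t = exp ((K' - K) * t ^ s) := by
  rw [barrier, barrier, mul_div_mul_left _ _ (rpow_pos_of_pos ht α).ne', ← exp_sub]
  ring_nf

theorem monotoneOn_barrier_div_barrier (hs : 0 ≤ s) (hK : K ≤ K') :
    MonotoneOn (fun t => barrier α s K t / barrier α s K' t) (Ioi 0) := fun x hx y hy hxy => by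
  simp only [barrier_div_barrier (mem_Ioi.1 hx), barrier_div_barrier (mem_Ioi.1 hy)]
  have := sub_nonneg.2 hK
  have := (mem_Ioi.1 hx).le
  gcongr

theorem barrier_antitone (α s : ℝ) (ht : 0 ≤ t) : Antitone fun K => barrier α s K t :=
  fun K K' hK => by
    simp only [barrier]
    gcongr

theorem barrier_zero (α s t : ℝ) : barrier α s 0 t = t ^ α := by simp [barrier]

theorem exp_neg_mul_rpow_le_barrier (hs : 0 ≤ s) (hK : 0 ≤ K) (ht : t ∈ Ioc 0 1) :
    exp (-K) * t ^ α ≤ barrier α s K t := by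
  rw [mul_comm, barrier]
  have := rpow_nonneg ht.1.le α
  have := mul_le_of_le_one_right hK (rpow_le_one ht.1.le ht.2 hs)
  gcongr

theorem barrier_le_exp_neg_mul_rpow (hs : 0 ≤ s) (hK : K ≤ 0) (ht : t ∈ Ioc 0 1) :
    barrier α s K t ≤ exp (-K) * t ^ α := by
  rw [mul_comm, barrier]
  have := rpow_nonneg ht.1.le α
  have := le_mul_of_le_one_right hK (rpow_le_one ht.1.le ht.2 hs)
  gcongr

theorem hasDerivAt_barrier (ht : 0 < t) :
    HasDerivAt (barrier α s K) (barrier α s K t * (α - K * s * t ^ s) / t) t := by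
  refine ((hasDerivAt_rpow_const (p := α) (Or.inl ht.ne')).mul
    (((hasDerivAt_rpow_const (p := s) (Or.inl ht.ne')).const_mul K).neg.exp)).congr_deriv ?_
  simp only [Pi.neg_apply, rpow_sub_one ht.ne', barrier]
  field_simp
  ring

theorem hasDerivAt_deriv_barrier (ht : 0 < t) :
    HasDerivAt (deriv (barrier α s K)) (barrier α s K t *
      ((α - K * s * t ^ s) ^ 2 - (α - K * s * t ^ s) - s * (K * s * t ^ s)) / t ^ 2) t := by
  have hderiv : deriv (barrier α s K) =ᶠ[𝓝 t] fun t => barrier α s K t * (α - K * s * t ^ s) / t :=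
    (eventually_gt_nhds ht).mono fun x hx => (hasDerivAt_barrier hx).deriv
  refine (((hasDerivAt_barrier ht).mul (((hasDerivAt_rpow_const (p := s)
    (Or.inl ht.ne')).const_mul (K * s)).const_sub α)).div
    (hasDerivAt_id t) ht.ne').congr_deriv ?_ |>.congr_of_eventuallyEq hderiv
  simp only [Pi.mul_apply, id_eq, rpow_sub_one ht.ne']
  field_simp
  ring

theorem contDiffOn_barrier (α s K : ℝ) : ContDiffOn ℝ 2 (barrier α s K) (Ioi 0) :=
  (contDiffOn_id.rpow_const_of_ne fun _ ht => (mem_Ioi.1 ht).ne').mul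
    ((contDiffOn_const.mul
      (contDiffOn_id.rpow_const_of_ne fun _ ht => (mem_Ioi.1 ht).ne')).neg.exp)

theorem angularOp_barrier (hα : α ^ 2 - α + μ = 0) (ht : 0 < t) :
    angularOp m (hardyPotential μ lam) (barrier α s K) t =
      ((1 - t ^ 2) / t ^ 2 * (K * s * t ^ s * (1 - 2 * α - s) + (K * s * t ^ s) ^ 2)
        + m * (K * s * t ^ s) + (lam + μ - m * α)) * barrier α s K t := by
  rw [angularOp, (hasDerivAt_barrier ht).deriv, (hasDerivAt_deriv_barrier ht).deriv, hardyPotential]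
  field_simp
  linear_combination barrier α s K t * (1 - t ^ 2) * hα

theorem continuousOn_hardyPotential (μ lam : ℝ) :
    ContinuousOn (hardyPotential μ lam) (Ioo 0 1) :=
  (continuousOn_const.div (continuousOn_id.pow 2) fun _ ht => pow_ne_zero 2 ht.1.ne').add
    continuousOn_const

theorem angularOp_const_mul (m M : ℝ) (V u : ℝ → ℝ) (t : ℝ) :
    angularOp m V (fun s => M * u s) t = M * angularOp m V u t := by
  simp only [angularOp, deriv_const_mul_field']
  ring

theorem angularOp_barrier_neg_one_le (hα : α ^ 2 - α + μ = 0) (hs : 0 < s)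
    (hsα : 3 * s ≤ 1 - 2 * α) (hm : 0 ≤ m) (ht : t ∈ Ioo 0 1) :
    angularOp m (hardyPotential μ lam) (barrier α s (-1)) t ≤
      (lam + μ - m * α - (1 - t ^ 2) / t ^ 2 * (s ^ 2 * t ^ s)) * barrier α s (-1) t := by
  have hts : 0 < t ^ s := rpow_pos_of_pos ht.1 s
  have hts₁ : t ^ s ≤ 1 := rpow_le_one ht.1.le ht.2.le hs.le
  have hcoef : 0 ≤ (1 - t ^ 2) / t ^ 2 := (div_pos (one_sub_sq_pos ht) (pow_pos ht.1 2)).le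
  have hr : -1 * s * t ^ s * (1 - 2 * α - s) + (-1 * s * t ^ s) ^ 2 ≤ -(s ^ 2 * t ^ s) := by
    nlinarith [mul_le_mul_of_nonneg_left hsα (mul_pos hs hts).le,
      mul_le_mul_of_nonneg_left hts₁ (mul_pos (pow_pos hs 2) hts).le]
  rw [angularOp_barrier hα ht.1]
  refine mul_le_mul_of_nonneg_right ?_ (barrier_pos ht.1).le
  have := mul_le_mul_of_nonneg_left hr hcoef
  have := mul_nonneg hm (mul_pos hs hts).le
  linarith

theorem le_angularOp_barrier (hα : α ^ 2 - α + μ = 0) (hs : 0 < s) (hs₂ : s ≤ 2)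
    (hsα : 2 * s ≤ 1 - 2 * α) (hsm : s ≤ m) (hK : 0 ≤ K) (ht : t ∈ Ioo 0 1) :
    (s ^ 2 * K - |lam + μ - m * α|) * t ^ (s - 2) * barrier α s K t ≤
      angularOp m (hardyPotential μ lam) (barrier α s K) t := by
  have ht₂ : 0 < t ^ 2 := pow_pos ht.1 2
  have hts : t ^ (s - 2) = t ^ s / t ^ 2 := by
    rw [rpow_sub ht.1, rpow_two]
  have hts₁ : 1 ≤ t ^ (s - 2) :=
    one_le_rpow_of_pos_of_le_one_of_nonpos ht.1 ht.2.le (sub_nonpos.2 hs₂)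
  have hcoef : 0 ≤ (1 - t ^ 2) / t ^ 2 := (div_pos (one_sub_sq_pos ht) ht₂).le
  have hr : 0 ≤ K * s * t ^ s :=
    mul_nonneg (mul_nonneg hK hs.le) (rpow_pos_of_pos ht.1 s).le
  rw [angularOp_barrier hα ht.1]
  refine mul_le_mul_of_nonneg_right ?_ (barrier_pos ht.1).le
  calc (s ^ 2 * K - |lam + μ - m * α|) * t ^ (s - 2)
      ≤ s ^ 2 * K * t ^ (s - 2) - |lam + μ - m * α| := by
        nlinarith [abs_nonneg (lam + μ - m * α)]
    _ = (1 - t ^ 2) / t ^ 2 * (K * s * t ^ s * s) + s * (K * s * t ^ s)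
          - |lam + μ - m * α| := by
        rw [hts]
        field_simp [ht.1.ne']
        ring
    _ ≤ (1 - t ^ 2) / t ^ 2 * (K * s * t ^ s * (1 - 2 * α - s) + (K * s * t ^ s) ^ 2)
          + m * (K * s * t ^ s) + (lam + μ - m * α) := by
        have := neg_abs_le (lam + μ - m * α)
        have hsα' : s ≤ 1 - 2 * α - s := by linarith
        have : K * s * t ^ s * s ≤ K * s * t ^ s * (1 - 2 * α - s) + (K * s * t ^ s) ^ 2 :=
          (mul_le_mul_of_nonneg_left hsα' hr).trans (le_add_of_nonneg_right (sq_nonneg _))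
        have := mul_le_mul_of_nonneg_left this hcoef
        have := mul_le_mul_of_nonneg_right hsm hr
        linarith

theorem tendsto_one_sub_sq_div_sq_mul_rpow_atTop (hs : 0 < s) (hs₂ : s < 2) :
    Tendsto (fun t : ℝ => (1 - t ^ 2) / t ^ 2 * (s ^ 2 * t ^ s)) (𝓝[>] 0) atTop := by
  have hlim : Tendsto (fun t : ℝ => (1 - t ^ 2) * s ^ 2) (𝓝[>] 0) (𝓝 (s ^ 2)) := by
    have : ContinuousAt (fun t : ℝ => (1 - t ^ 2) * s ^ 2) 0 := by fun_prop
    simpa [ContinuousAt] using this.tendsto.mono_left nhdsWithin_le_nhds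
  refine ((tendsto_rpow_neg_nhdsGT_zero (sub_neg.2 hs₂)).atTop_mul_pos (pow_pos hs 2) hlim).congr'
    ?_
  filter_upwards [self_mem_nhdsWithin] with t ht
  rw [rpow_sub ht, rpow_two]
  ring

theorem exists_angularOp_const_mul_barrier_le_rpow {p : ℝ} (hp : 1 < p)
    (hα : α ^ 2 - α + μ = 0) (hs : 0 < s) (hs₂ : s < 2) (hsα : 3 * s ≤ 1 - 2 * α) (hm : 0 ≤ m) :
    ∃ M > 0, ∀ t ∈ Ioo 0 1,
      angularOp m (hardyPotential μ lam) (fun t => M * barrier α s (-1) t) t ≤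
        (M * barrier α s (-1) t) ^ p := by
  have hp₀ : p - 1 ≠ 0 := (sub_pos.2 hp).ne'
  obtain ⟨N, hN, hthr⟩ := exists_pos_forall_le_add_mul_rpow
    (g := fun t => (1 - t ^ 2) / t ^ 2 * (s ^ 2 * t ^ s))
    (fun t ht => mul_nonneg (div_pos (one_sub_sq_pos ht) (pow_pos ht.1 2)).le
      (mul_pos (pow_pos hs 2) (rpow_pos_of_pos ht.1 s)).le)
    (tendsto_one_sub_sq_div_sq_mul_rpow_atTop hs hs₂) (lam + μ - m * α) (α * (p - 1))
  have hM : 0 < N ^ (p - 1)⁻¹ := rpow_pos_of_pos hN _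
  refine ⟨N ^ (p - 1)⁻¹, hM, fun t ht => ?_⟩
  have hb := barrier_pos (α := α) (s := s) (K := -1) ht.1
  have hpow : N * t ^ (α * (p - 1)) ≤ (N ^ (p - 1)⁻¹ * barrier α s (-1) t) ^ (p - 1) := by
    rw [mul_rpow hM.le hb.le, rpow_inv_rpow hN.le hp₀, rpow_mul ht.1.le, ← barrier_zero α s]
    exact mul_le_mul_of_nonneg_left (rpow_le_rpow (barrier_pos ht.1).le
      (barrier_antitone α s ht.1.le (neg_one_lt_zero.le)) (sub_pos.2 hp).le) hN.le
  calc angularOp m (hardyPotential μ lam) (fun t => N ^ (p - 1)⁻¹ * barrier α s (-1) t) t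
      ≤ (lam + μ - m * α - (1 - t ^ 2) / t ^ 2 * (s ^ 2 * t ^ s)) *
          (N ^ (p - 1)⁻¹ * barrier α s (-1) t) := by
        rw [angularOp_const_mul, mul_left_comm]
        exact mul_le_mul_of_nonneg_left (angularOp_barrier_neg_one_le hα hs hsα hm ht) hM.le
    _ ≤ (N ^ (p - 1)⁻¹ * barrier α s (-1) t) ^ (p - 1) * (N ^ (p - 1)⁻¹ * barrier α s (-1) t) :=
        mul_le_mul_of_nonneg_right ((sub_le_iff_le_add'.2 (hthr t ht)).trans hpow)
          (mul_pos hM hb).le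
    _ = (N ^ (p - 1)⁻¹ * barrier α s (-1) t) ^ p := by
        rw [← rpow_add_one (mul_pos hM hb).ne', sub_add_cancel]

theorem exists_mul_rpow_mul_barrier_le_angularOp (hα : α ^ 2 - α + μ = 0) (hs : 0 < s)
    (hs₂ : s ≤ 2) (hsα : 2 * s ≤ 1 - 2 * α) (hsm : s ≤ m) (B : ℝ) :
    ∃ K ≥ 0, ∀ t ∈ Ioo 0 1, B * t ^ (s - 2) * barrier α s K t ≤
      angularOp m (hardyPotential μ lam) (barrier α s K) t := by
  have hK : 0 ≤ (|B| + |lam + μ - m * α|) / s ^ 2 := by positivity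
  refine ⟨_, hK, fun t ht => le_trans ?_ (le_angularOp_barrier hα hs hs₂ hsα hsm hK ht)⟩
  have hts := (rpow_pos_of_pos ht.1 (s - 2)).le
  rw [mul_div_cancel₀ _ (pow_pos hs 2).ne', add_sub_cancel_right]
  exact mul_le_mul_of_nonneg_right (mul_le_mul_of_nonneg_right (le_abs_self B) hts)
    (barrier_pos ht.1).le

theorem mul_rpow_rpow_le_mul_rpow {M q β : ℝ} (hM : 0 ≤ M) (hαq : β ≤ α * q) (ht : t ∈ Ioc 0 1) :
    (M * t ^ α) ^ q ≤ M ^ q * t ^ β := by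
  rw [mul_rpow hM (rpow_nonneg ht.1.le α), ← rpow_mul ht.1.le]
  exact mul_le_mul_of_nonneg_left (rpow_le_rpow_of_exponent_ge ht.1 ht.2 hαq) (rpow_nonneg hM q)

theorem const_mul_barrier_neg_one_le {M : ℝ} (hs : 0 ≤ s) (hM : 0 ≤ M) (ht : t ∈ Ioc 0 1) :
    M * barrier α s (-1) t ≤ M * exp 1 * t ^ α := by
  simpa [mul_assoc] using
    mul_le_mul_of_nonneg_left (barrier_le_exp_neg_mul_rpow (α := α) hs neg_one_lt_zero.le ht) hM

theorem exists_super_and_linear_barrier {p : ℝ} (hm : 0 < m) (hp : 1 < p)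
    (hα : α ^ 2 - α + μ = 0) (hα_lt : α < 1 / 2) (hαp : -2 < α * (p - 1)) (lam : ℝ) :
    ∃ s > 0, ∃ M > 0, ∃ K ≥ 0, ∀ t ∈ Ioo 0 1,
      angularOp m (hardyPotential μ lam) (fun t => M * barrier α s (-1) t) t ≤
        (M * barrier α s (-1) t) ^ p ∧
      p * (M * barrier α s (-1) t) ^ (p - 1) * barrier α s K t ≤
        angularOp m (hardyPotential μ lam) (barrier α s K) t := by
  obtain ⟨s, hs, hs_lt⟩ : ∃ s > 0, s < min (min 2 m) (min ((1 - 2 * α) / 3) (2 + α * (p - 1))) :=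
    exists_between (by simp only [lt_min_iff]; constructor <;> constructor <;> linarith)
  obtain ⟨⟨hs₂, hsm⟩, hsα, hsp⟩ := by simpa only [lt_min_iff] using hs_lt
  obtain ⟨M, hM, hz⟩ := exists_angularOp_const_mul_barrier_le_rpow (lam := lam) hp hα hs hs₂
    (by linarith) hm.le
  obtain ⟨K, hK, hh⟩ := exists_mul_rpow_mul_barrier_le_angularOp (lam := lam) hα hs hs₂.le
    (by linarith) hsm.le (p * (M * exp 1) ^ (p - 1))
  refine ⟨s, hs, M, hM, K, hK, fun t ht => ⟨hz t ht, le_trans ?_ (hh t ht)⟩⟩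
  have htc := Ioo_subset_Ioc_self ht
  have hpow : (M * barrier α s (-1) t) ^ (p - 1) ≤ (M * exp 1) ^ (p - 1) * t ^ (s - 2) :=
    (rpow_le_rpow (mul_pos hM (barrier_pos ht.1)).le (const_mul_barrier_neg_one_le hs.le hM.le htc)
      (sub_pos.2 hp).le).trans
      (mul_rpow_rpow_le_mul_rpow (mul_pos hM (exp_pos 1)).le (by linarith) htc)
  rw [mul_assoc p ((M * exp 1) ^ (p - 1))]
  exact mul_le_mul_of_nonneg_right (mul_le_mul_of_nonneg_left hpow (zero_lt_one.trans hp).le)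
    (barrier_pos ht.1).le

theorem exists_angularOp_eq_rpow_of_root {p : ℝ} (hm : 0 < m) (hp : 1 < p)
    (hα : α ^ 2 - α + μ = 0) (hα_lt : α < 1 / 2) (hαp : -2 < α * (p - 1)) (lam : ℝ) :
    ∃ c > 0, ∃ C : ℝ, ∃ v : ℝ → ℝ, ContDiffOn ℝ 2 v (Ioo 0 1) ∧
      (∀ t ∈ Ioc 0 1, v t ∈ Icc (c * t ^ α) (C * t ^ α)) ∧
      ∀ t ∈ Ioo 0 1, angularOp m (hardyPotential μ lam) v t = v t ^ p := by
  obtain ⟨s, hs, M, hM, K, hK, hzh⟩ := exists_super_and_linear_barrier hm hp hα hα_lt hαp lam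
  have hK_neg : -1 ≤ K := neg_one_lt_zero.le.trans hK
  have hbarrier (K : ℝ) : ContDiffOn ℝ 2 (barrier α s K) (Ioo 0 1) :=
    (contDiffOn_barrier α s K).mono Ioo_subset_Ioi_self
  have hmono : MonotoneOn (fun t => M * barrier α s (-1) t / barrier α s K t) (Ioc 0 1) := by
    simp only [mul_div_assoc]
    exact fun x hx y hy hxy => mul_le_mul_of_nonneg_left
      (monotoneOn_barrier_div_barrier hs.le hK_neg hx.1 hy.1 hxy) hM.le
  obtain ⟨v, hv, hv_mem, hv_eq⟩ := exists_angularOp_eq_rpow (c := M) hp hM.le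
    (continuousOn_hardyPotential μ lam) (hbarrier K) (fun t ht => barrier_pos ht.1)
    (contDiffOn_const.mul (hbarrier (-1))) (fun t ht => (hzh t ht).1) (fun t ht => (hzh t ht).2)
    hmono fun t ht => mul_le_mul_of_nonneg_left (barrier_antitone α s ht.1.le hK_neg) hM.le
  refine ⟨M * exp (-K), mul_pos hM (exp_pos _), M * exp 1, v, hv, fun t ht => ⟨?_, ?_⟩, hv_eq⟩
  · rw [mul_assoc]
    exact (mul_le_mul_of_nonneg_left (exp_neg_mul_rpow_le_barrier hs.le hK ht) hM.le).trans
      (hv_mem t ht).1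
  · exact (hv_mem t ht).2.trans (const_mul_barrier_neg_one_le hs.le hM.le ht)

end Barrier

theorem aMinus_sq_sub_aMinus_add {μ : ℝ} (hμ : μ ≤ 1 / 4) : aMinus μ ^ 2 - aMinus μ + μ = 0 := by
  have := sq_sqrt (sub_nonneg.2 hμ)
  rw [aMinus]
  linear_combination this

theorem aMinus_lt_half {μ : ℝ} (hμ : μ < 1 / 4) : aMinus μ < 1 / 2 :=
  sub_lt_self _ (sqrt_pos.2 (sub_pos.2 hμ))

theorem aMinus_nonneg {μ : ℝ} (hμ : 0 ≤ μ) : 0 ≤ aMinus μ :=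
  sub_nonneg.2 (sqrt_le_iff.2 ⟨by norm_num, by linarith⟩)

theorem aMinus_neg {μ : ℝ} (hμ : μ < 0) : aMinus μ < 0 :=
  sub_neg.2 ((lt_sqrt (by norm_num)).2 (by linarith))

theorem neg_two_lt_aMinus_mul {μ p : ℝ} (hp : 1 < p) (hKO : μ < 0 → p < 1 - 2 / aMinus μ) :
    -2 < aMinus μ * (p - 1) := by
  rcases lt_or_ge μ 0 with hμ | hμ
  · have hp' : p - 1 < -2 / aMinus μ := by
      rw [neg_div]
      linarith [hKO hμ]
    rwa [lt_div_iff_of_neg (aMinus_neg hμ), mul_comm] at hp'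
  · exact (neg_lt_zero.2 two_pos).trans_le (mul_nonneg (aMinus_nonneg hμ) (sub_pos.2 hp).le)

theorem stmt10_general (m μ p lam : ℝ) (hm : 0 < m) (hμ : μ < 1 / 4) (hp1 : 1 < p)
    (hKO : μ < 0 → p < 1 - 2 / aMinus μ) :
    ∃ c₁ c₂ : ℝ, 0 < c₁ ∧ c₁ < c₂ ∧ ∃ v : ℝ → ℝ,
      (∀ t ∈ Ioc (0 : ℝ) 1, 0 < v t) ∧
      ContDiffOn ℝ 2 v (Ioo 0 1) ∧
      (∀ t ∈ Ioo (0 : ℝ) 1,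
        (1 - t ^ 2) * deriv (deriv v) t - m * t * deriv v t
          + (μ / t ^ 2) * v t + lam * v t = v t ^ p) ∧
      (∀ t ∈ Ioc (0 : ℝ) 1, c₁ * t ^ aMinus μ < v t ∧ v t < c₂ * t ^ aMinus μ) := by
  obtain ⟨c, hc, C, v, hv, hv_mem, hv_eq⟩ := exists_angularOp_eq_rpow_of_root hm hp1
    (aMinus_sq_sub_aMinus_add hμ.le) (aMinus_lt_half hμ) (neg_two_lt_aMinus_mul hp1 hKO) lam
  have hcC : c ≤ C := by
    have h₁ := hv_mem 1 (right_mem_Ioc.2 one_pos)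
    simpa using h₁.1.trans h₁.2
  refine ⟨c / 2, 2 * C, half_pos hc, by linarith, v, fun t ht => ?_, hv, fun t ht => ?_,
    fun t ht => ⟨?_, ?_⟩⟩
  · exact (mul_pos hc (rpow_pos_of_pos ht.1 _)).trans_le (hv_mem t ht).1
  · rw [← hv_eq t ht, angularOp, hardyPotential]
    ring
  · exact (mul_lt_mul_of_pos_right (half_lt_self hc) (rpow_pos_of_pos ht.1 _)).trans_le
      (hv_mem t ht).1
  · exact (hv_mem t ht).2.trans_lt
      (mul_lt_mul_of_pos_right (by linarith) (rpow_pos_of_pos ht.1 _))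

/-- for `1 < p < p_KO` the angular equation has a positive solution
`v` with `c₁ t^{α₋} < v(t) < c₂ t^{α₋}` on `(0,1]`. -/
theorem stmt10 (n : ℕ) (hn : 2 ≤ n) (μ p : ℝ) (hμ : μ < 1 / 4) (hp1 : 1 < p)
    (hKO : μ < 0 → p < 1 - 2 / aMinus μ) :
    ∃ c₁ c₂ : ℝ, 0 < c₁ ∧ c₁ < c₂ ∧ ∃ v : ℝ → ℝ,
      (∀ t ∈ Set.Ioc (0 : ℝ) 1, 0 < v t) ∧
      ContDiffOn ℝ 2 v (Set.Ioo 0 1) ∧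
      (∀ t ∈ Set.Ioo (0 : ℝ) 1,
        (1 - t ^ 2) * deriv (deriv v) t - ((n : ℝ) - 1) * t * deriv v t
          + (μ / t ^ 2) * v t + Lam n (-(2 / (p - 1))) * v t = v t ^ p) ∧
      (∀ t ∈ Set.Ioc (0 : ℝ) 1, c₁ * t ^ aMinus μ < v t ∧ v t < c₂ * t ^ aMinus μ) := by
  exact stmt10_general (n - 1) μ p _ (sub_pos.2 (by exact_mod_cast hn)) hμ hp1 hKO
end
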